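/- arXiv:1812.04413 — 3 statements merged into one kernel-verified Lean document; each statement's English description precedes it below -/
import Mathlib

section
/- The logic K4(⋄≥, ⟟) has the local finite model property: if a formula φ of the modal language (⋄≥, ⟟) is satisfied at some world of some Kripke structure whose accessibility relation is transitive, then φ is satisfied at some world of some Kripke structure with a finite universe whose accessibility relation is transitive. -/
/-- Formulas of the modal language `(⋄≥, ⟟)`: propositional variables, Boolean
connectives (¬, ∧ suffice), graded forward modalities `⋄≥ₙ`, and the basic
converse modality `⟟`. -/
inductive MF : Type where
  | var  : ℕ → MF
  | neg  : MF → MF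
  | and  : MF → MF → MF
  | dia  : ℕ → MF → MF   -- `dia n φ` is `⋄≥ₙ φ`
  | conv : MF → MF       -- `conv φ` is `⟟φ`

/-- Satisfaction in a Kripke structure `(W, R, V)`.  `⋄≥ₙ φ` holds at `w` iff at
least `n` worlds `v` satisfy `R w v` and `φ`; `⟟φ` holds at `w` iff some
`R`-predecessor of `w` satisfies `φ`. -/
def Sat {W : Type u} (R : W → W → Prop) (V : ℕ → Set W) : MF → W → Prop
  | .var p, w => w ∈ V p
  | .neg φ, w => ¬ Sat R V φ w
  | .and φ ψ, w => Sat R V φ w ∧ Sat R V ψ w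
  | .dia n φ, w => ∃ s : Finset W, n ≤ s.card ∧ ∀ v ∈ s, R w v ∧ Sat R V φ v
  | .conv φ, w => ∃ v : W, R v w ∧ Sat R V φ v

universe v

namespace K4FMP

/-- A finite union of sets of size at most `m` has size at most `card * m`. -/
lemma encard_biUnion_bound {ι : Type*} {α : Type*} (I : Finset ι) (A : ι → Set α) (m : ℕ)
    (h : ∀ i ∈ I, (A i).encard ≤ m) : (⋃ i ∈ I, A i).encard ≤ ((I.card * m : ℕ) : ℕ∞) := by
  classical
  induction I using Finset.induction with
  | empty => simp
  | insert a s ha ih =>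
    rw [Finset.set_biUnion_insert, Finset.card_insert_of_notMem ha]
    refine (Set.encard_union_le _ _).trans ?_
    have h1 := h a (Finset.mem_insert_self a s)
    have h2 := ih (fun i hi => h i (Finset.mem_insert_of_mem hi))
    refine (add_le_add h1 h2).trans ?_
    norm_cast
    apply le_of_eq
    ring

/-- Extension of injective namings. -/
lemma extend_naming {W : Type*} {K : Type*} [Fintype K] (ν : W → K) (A X : Set W)
    (hA : Set.InjOn ν A) (hAX : A ⊆ X) (hX : X.encard ≤ Fintype.card K) :
    ∃ μ : W → K, Set.InjOn μ X ∧ ∀ a ∈ A, μ a = ν a := by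
  classical
  have hXf : X.Finite := Set.finite_of_encard_le_coe hX
  by_cases hne : Nonempty K
  swap
  · exact ⟨ν, fun a _ => (hne ⟨ν a⟩).elim, fun _ _ => rfl⟩
  have hAf : A.Finite := hXf.subset hAX
  have key : (X \ A).encard ≤ ((ν '' A)ᶜ).encard := by
    have h1 : (X \ A).encard + A.encard = X.encard := Set.encard_sdiff_add_encard_of_subset hAX
    have h2 : (ν '' A).encard + ((ν '' A)ᶜ).encard = (Set.univ : Set K).encard :=
      Set.encard_add_encard_compl _
    rw [hA.encard_image] at h2
    have h3 : (Set.univ : Set K).encard = Fintype.card K := by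
      rw [Set.encard_univ, ENat.card_eq_coe_fintype_card]
    have h4 : A.encard + (X \ A).encard ≤ A.encard + ((ν '' A)ᶜ).encard := by
      rw [h2, h3, add_comm, h1]; exact hX
    exact (ENat.add_le_add_iff_left (Set.encard_ne_top_iff.2 hAf)).1 h4
  obtain ⟨g, hg1, hg2⟩ := Set.Finite.exists_injOn_of_encard_le (hXf.sdiff (t := A)) key
  refine ⟨fun a => if a ∈ A then ν a else g a, ?_, fun a ha => by simp [ha]⟩
  intro a ha b hb hab
  by_cases h1 : a ∈ A <;> by_cases h2 : b ∈ A
  · simp only [h1, h2, if_true] at hab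
    exact hA h1 h2 hab
  · simp only [h1, h2, if_true, if_false] at hab
    exact (hg1 ⟨hb, h2⟩ ⟨a, h1, hab⟩).elim
  · simp only [h1, h2, if_true, if_false] at hab
    exact (hg1 ⟨ha, h1⟩ ⟨b, h2, hab.symm⟩).elim
  · simp only [h1, h2, if_false] at hab
    exact hg2 ⟨ha, h1⟩ ⟨hb, h2⟩ hab

section Codes
variable {W : Type*} {K : Type} {E : Type} (e : W → E) (S D : W → Set W)

/-- Local description of a world under a naming `ν`. -/
def ent (ν : W → K) (x : W) : K × E × Set K × Set K := (ν x, e x, ν '' S x, ν '' D x)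

/-- Code of a named closed set `D x` with root `x`. -/
def code (ν : W → K) (x : W) : (K × E × Set K × Set K) × Set (K × E × Set K × Set K) :=
  (ent e S D ν x, ent e S D ν '' D x)

variable {e S D}

lemma code_congr (hx : ∀ x, x ∈ D x) (hS : ∀ x, S x ⊆ D x)
    (hD : ∀ x, ∀ y ∈ D x, D y ⊆ D x) {ν μ : W → K} {x : W} (h : ∀ y ∈ D x, ν y = μ y) :
    code e S D ν x = code e S D μ x := by
  have hent : ∀ y ∈ D x, ent e S D ν y = ent e S D μ y := by
    intro y hy
    have h1 : ν '' S y = μ '' S y :=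
      Set.image_congr (fun a ha => h a (hD x y hy (hS y ha)))
    have h2 : ν '' D y = μ '' D y := Set.image_congr (fun a ha => h a (hD x y hy ha))
    simp only [ent, h1, h2, h y hy]
  simp only [code, hent x (hx x), Set.image_congr hent]

lemma code_sub_aux (hx : ∀ x, x ∈ D x) (hD : ∀ x, ∀ y ∈ D x, D y ⊆ D x) {ν μ : W → K} {x y : W}
    (hμ : Set.InjOn μ (D y)) (h : ent e S D ν '' D x ⊆ ent e S D μ '' D y)
    {s s' : W} (hs : s ∈ D x) (hs' : s' ∈ D y) (hn : μ s' = ν s) :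
    ent e S D ν s = ent e S D μ s' ∧ ent e S D ν '' D s ⊆ ent e S D μ '' D s' := by
  have h0 : ∀ u ∈ D x, ∀ u' ∈ D y, μ u' = ν u → ent e S D ν u = ent e S D μ u' := by
    intro u hu u' hu' hn
    obtain ⟨u'', hu'', heq⟩ := h ⟨u, hu, rfl⟩
    have h2 : μ u'' = ν u := congrArg Prod.fst heq
    have h3 : u'' = u' := hμ hu'' hu' (h2.trans hn.symm)
    rw [← heq, h3]
  have h1 := h0 s hs s' hs' hn
  refine ⟨h1, ?_⟩
  have hDeq : ν '' D s = μ '' D s' := congrArg (fun p => p.2.2.2) h1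
  rintro _ ⟨u, hu, rfl⟩
  have : ν u ∈ μ '' D s' := hDeq ▸ ⟨u, hu, rfl⟩
  obtain ⟨u', hu', hun⟩ := this
  exact ⟨u', hu', (h0 u (hD x s hs hu) u' (hD y s' hs' hu') hun).symm⟩

lemma code_S (hx : ∀ x, x ∈ D x) (hS : ∀ x, S x ⊆ D x)
    (hD : ∀ x, ∀ y ∈ D x, D y ⊆ D x) {ν μ : W → K} {x y : W}
    (hν : Set.InjOn ν (D x)) (hμ : Set.InjOn μ (D y))
    (h : code e S D ν x = code e S D μ y) :
    code e S D ν '' S x ⊆ code e S D μ '' S y := by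
  have hroot : ent e S D ν x = ent e S D μ y := congrArg Prod.fst h
  have hE : ent e S D ν '' D x = ent e S D μ '' D y := congrArg Prod.snd h
  have hSeq : ν '' S x = μ '' S y := congrArg (fun p => p.2.2.1) hroot
  rintro _ ⟨s, hs, rfl⟩
  have : ν s ∈ μ '' S y := hSeq ▸ ⟨s, hs, rfl⟩
  obtain ⟨s', hs', hn⟩ := this
  obtain ⟨a1, a2⟩ := code_sub_aux hx hD hμ hE.le (hS x hs) (hS y hs') hn
  obtain ⟨_, b2⟩ := code_sub_aux hx hD hν hE.ge (hS y hs') (hS x hs) hn.symm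
  refine ⟨s', hs', ?_⟩
  simp only [code, a1, Set.Subset.antisymm a2 b2]

end Codes

section Core
variable {W : Type*} {T : Type} (R : W → W → Prop) (t : W → T) (N : ℕ)

/-- Labels with fewer than `N` successors. -/
def Rare (x : W) : Set T := {l | {v | R x v ∧ t v = l}.encard < N}

/-- Successors with rare label. -/
def RS (x : W) : Set W := {v | R x v ∧ t v ∈ Rare R t N x}

/-- Closure under rare successors. -/
def Cl (x : W) : Set W := {y | Relation.ReflTransGen (fun a b => b ∈ RS R t N a) x y}

/-- Labels of predecessors. -/
def Pre (x : W) : Set T := {l | ∃ z, R z x ∧ t z = l}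

variable {R t N}

lemma Rare_mono (htr : ∀ x y z : W, R x y → R y z → R x z) {x y : W} (h : R x y) :
    Rare R t N x ⊆ Rare R t N y := by
  intro l hl
  have hsub : {v | R y v ∧ t v = l} ⊆ {v | R x v ∧ t v = l} :=
    fun v hv => ⟨htr _ _ _ h hv.1, hv.2⟩
  exact lt_of_le_of_lt (Set.encard_le_encard hsub) hl

lemma Pre_mono (htr : ∀ x y z : W, R x y → R y z → R x z) {x y : W} (h : R x y) :
    Pre R t x ⊆ Pre R t y := by
  rintro l ⟨z, hz, rfl⟩
  exact ⟨z, htr _ _ _ hz h, rfl⟩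

lemma RS_bound [Fintype T] (x : W) : (RS R t N x).encard ≤ ((Fintype.card T * N : ℕ) : ℕ∞) := by
  classical
  have h := encard_biUnion_bound (Finset.univ : Finset T)
    (fun l => {v | (R x v ∧ t v = l) ∧ l ∈ Rare R t N x}) N (by
      intro l _
      by_cases hl : l ∈ Rare R t N x
      · exact (Set.encard_le_encard (fun v hv => hv.1)).trans (le_of_lt hl)
      · simp [hl])
  refine le_trans (Set.encard_le_encard ?_) h
  intro v hv
  simp only [Set.mem_iUnion]
  exact ⟨t v, Finset.mem_univ _, ⟨hv.1, rfl⟩, hv.2⟩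

lemma Cl_self (x : W) : x ∈ Cl R t N x := Relation.ReflTransGen.refl

lemma RS_sub_Cl (x : W) : RS R t N x ⊆ Cl R t N x :=
  fun _ h => Relation.ReflTransGen.single h

lemma Cl_trans (x : W) : ∀ y ∈ Cl R t N x, Cl R t N y ⊆ Cl R t N x :=
  fun _ hy _ hz => Relation.ReflTransGen.trans hy hz

lemma Cl_bound [Fintype T] (htr : ∀ x y z : W, R x y → R y z → R x z) :
    ∃ M : ℕ, ∀ x : W, (Cl R t N x).encard ≤ M := by
  classical
  suffices H : ∀ k : ℕ, ∃ M : ℕ, ∀ x : W, (Rare R t N x)ᶜ.ncard < k →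
      (Cl R t N x).encard ≤ M by
    obtain ⟨M, hM⟩ := H (Fintype.card T + 1)
    refine ⟨M, fun x => hM x ?_⟩
    have := Set.ncard_le_card ((Rare R t N x)ᶜ)
    rw [Nat.card_eq_fintype_card] at this
    omega
  intro k
  induction k with
  | zero => exact ⟨0, fun x h => absurd h (Nat.not_lt_zero _)⟩
  | succ k ih =>
    obtain ⟨M, hM⟩ := ih
    refine ⟨(1 + Fintype.card T * N) + (Fintype.card T * N) * M, fun x hx => ?_⟩
    have hfin : (RS R t N x).Finite := Set.finite_of_encard_le_coe (RS_bound x)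
    have hcard : hfin.toFinset.card ≤ Fintype.card T * N := by
      have := RS_bound (R := R) (t := t) (N := N) x
      rw [hfin.encard_eq_coe_toFinset_card] at this
      exact_mod_cast this
    have hsub : Cl R t N x ⊆ ({x} ∪ RS R t N x) ∪
        ⋃ s ∈ hfin.toFinset, {y | y ∈ Cl R t N s ∧ ¬ Rare R t N s ⊆ Rare R t N x} := by
      intro y hy
      induction hy with
      | refl => exact Or.inl (Or.inl rfl)
      | tail _ hz ih =>
        rename_i y z _
        rcases ih with (h1 | h1) | h1
        · have : y = x := h1
          subst this
          exact Or.inl (Or.inr hz)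
        · by_cases hc : Rare R t N y ⊆ Rare R t N x
          · exact Or.inl (Or.inr ⟨htr _ _ _ h1.1 hz.1, hc hz.2⟩)
          · right
            simp only [Set.mem_iUnion]
            exact ⟨y, hfin.mem_toFinset.2 h1, Relation.ReflTransGen.single hz, hc⟩
        · right
          simp only [Set.mem_iUnion] at h1 ⊢
          obtain ⟨s, hs, hys, hc⟩ := h1
          exact ⟨s, hs, Relation.ReflTransGen.tail hys hz, hc⟩
    refine (Set.encard_le_encard hsub).trans ?_
    refine (Set.encard_union_le _ _).trans ?_
    have hA : ({x} ∪ RS R t N x).encard ≤ ((1 + Fintype.card T * N : ℕ) : ℕ∞) := by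
      refine (Set.encard_union_le _ _).trans ?_
      rw [Set.encard_singleton]
      push_cast
      have := RS_bound (R := R) (t := t) (N := N) x
      push_cast at this
      gcongr
    have hB := encard_biUnion_bound hfin.toFinset
      (fun s => {y | y ∈ Cl R t N s ∧ ¬ Rare R t N s ⊆ Rare R t N x}) M (by
        intro s hs
        by_cases hc : Rare R t N s ⊆ Rare R t N x
        · simp [hc]
        · refine (Set.encard_le_encard (fun y hy => hy.1)).trans (hM s ?_)
          have hs' := hfin.mem_toFinset.1 hs
          have hm : Rare R t N x ⊆ Rare R t N s := Rare_mono htr hs'.1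
          have : (Rare R t N s)ᶜ ⊂ (Rare R t N x)ᶜ :=
            ⟨Set.compl_subset_compl.2 hm, fun h => hc (Set.compl_subset_compl.1 h)⟩
          have := Set.ncard_lt_ncard this (Set.toFinite _)
          omega)
    refine (add_le_add hA hB).trans ?_
    norm_cast
    exact Nat.add_le_add_left (Nat.mul_le_mul_right M hcard) _

variable (R t N)

/-- Label data of a world: its label, labels of predecessors, rare labels. -/
def dat (x : W) : T × Set T × Set T := (t x, Pre R t x, Rare R t N x)

/-- The code of `x` under the naming `ν`. -/
abbrev cd {K : Type} (ν : W → K) (x : W) :=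
  code (dat R t N) (RS R t N) (Cl R t N) ν x

/-- The relation between named worlds. -/
def RP {K : Type} (p q : (W → K) × W) : Prop :=
  t p.2 ∈ Pre R t q.2 ∧ Pre R t p.2 ⊆ Pre R t q.2 ∧ Rare R t N p.2 ⊆ Rare R t N q.2 ∧
  (t q.2 ∈ Rare R t N p.2 → cd R t N q.1 q.2 ∈ cd R t N p.1 '' RS R t N p.2) ∧
  (∀ c ∈ cd R t N q.1 '' RS R t N q.2, c.1.2.1.1 ∈ Rare R t N p.2 →
    c ∈ cd R t N p.1 '' RS R t N p.2)

variable {R t N}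

lemma RP_trans {K : Type} {p q r : (W → K) × W} (h1 : RP R t N p q) (h2 : RP R t N q r) :
    RP R t N p r := by
  obtain ⟨a1, a2, a3, a4, a5⟩ := h1
  obtain ⟨b1, b2, b3, b4, b5⟩ := h2
  exact ⟨b2 a1, a2.trans b2, a3.trans b3, fun h => a5 _ (b4 (a3 h)) h,
    fun c hc h => a5 c (b5 c hc (a3 h)) h⟩

/-- Two named worlds with the same code. -/
lemma cd_inv {K : Type} {p q : (W → K) × W} (hp : Set.InjOn p.1 (Cl R t N p.2))
    (hq : Set.InjOn q.1 (Cl R t N q.2)) (h : cd R t N p.1 p.2 = cd R t N q.1 q.2) :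
    t p.2 = t q.2 ∧ Pre R t p.2 = Pre R t q.2 ∧ Rare R t N p.2 = Rare R t N q.2 ∧
    cd R t N p.1 '' RS R t N p.2 = cd R t N q.1 '' RS R t N q.2 := by
  refine ⟨congrArg (fun c => c.1.2.1.1) h, congrArg (fun c => c.1.2.1.2.1) h,
    congrArg (fun c => c.1.2.1.2.2) h, Set.Subset.antisymm ?_ ?_⟩
  · exact code_S Cl_self RS_sub_Cl Cl_trans hp hq h
  · exact code_S Cl_self RS_sub_Cl Cl_trans hq hp h.symm

lemma RP_congr {K : Type} {p p' q q' : (W → K) × W} (hp : Set.InjOn p.1 (Cl R t N p.2))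
    (hq : Set.InjOn q.1 (Cl R t N q.2)) (hp' : Set.InjOn p'.1 (Cl R t N p'.2))
    (hq' : Set.InjOn q'.1 (Cl R t N q'.2)) (h1 : cd R t N p.1 p.2 = cd R t N p'.1 p'.2)
    (h2 : cd R t N q.1 q.2 = cd R t N q'.1 q'.2) (h : RP R t N p q) : RP R t N p' q' := by
  obtain ⟨a1, a2, a3, a4⟩ := cd_inv hp hp' h1
  obtain ⟨b1, b2, b3, b4⟩ := cd_inv hq hq' h2
  unfold RP at h ⊢
  rw [← a1, ← a2, ← a3, ← a4, ← b1, ← b2, ← b3, ← b4, ← h2]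
  exact h

lemma RP_of_R {K : Type} (htr : ∀ x y z : W, R x y → R y z → R x z) {x y : W} (μ : W → K)
    (h : R x y) : RP R t N (μ, x) (μ, y) := by
  refine ⟨⟨x, h, rfl⟩, Pre_mono htr h, Rare_mono htr h, fun hr => ⟨y, ⟨h, hr⟩, rfl⟩, ?_⟩
  rintro _ ⟨z, hz, rfl⟩ hr
  exact ⟨z, ⟨htr _ _ _ h hz.1, hr⟩, rfl⟩

theorem core [Finite T] [Nonempty W] (htr : ∀ x y z : W, R x y → R y z → R x z) (hN : 1 ≤ N) :
    ∃ (B : Type) (RB : B → B → Prop) (h : B → W), Finite B ∧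
      (∀ x y z : B, RB x y → RB y z → RB x z) ∧ (∀ w, ∃ c, t (h c) = t w) ∧
      (∀ c, ∀ Q : Set T, ∀ n ≤ N,
        ((∃ s : Finset B, n ≤ s.card ∧ ∀ d ∈ s, RB c d ∧ t (h d) ∈ Q) ↔
          ∃ s : Finset W, n ≤ s.card ∧ ∀ v ∈ s, R (h c) v ∧ t v ∈ Q)) ∧
      (∀ c l, (∃ d, RB d c ∧ t (h d) = l) ↔ ∃ v, R v (h c) ∧ t v = l) := by
  classical
  have := Fintype.ofFinite T
  obtain ⟨M, hM⟩ := Cl_bound (R := R) (t := t) (N := N) htr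
  let K : Type := Fin (M + N * M + 1)
  have hK : Fintype.card K = M + N * M + 1 := Fintype.card_fin _
  let P : Type _ := {p : (W → K) × W // Set.InjOn p.1 (Cl R t N p.2)}
  let cP : P → _ := fun p => cd R t N p.1.1 p.1.2
  let B : Type := Set.range cP
  let rep : B → P := fun c => c.2.choose
  have hrep : ∀ c, cP (rep c) = c.1 := fun c => c.2.choose_spec
  let mk : P → B := fun p => ⟨cP p, p, rfl⟩
  have hmk : ∀ p, cP (rep (mk p)) = cP p := fun p => hrep (mk p)
  let RB : B → B → Prop := fun c d => RP R t N (rep c).1 (rep d).1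
  have ht : ∀ p, t (rep (mk p)).1.2 = t p.1.2 := fun p =>
    (cd_inv (rep (mk p)).2 p.2 (hmk p)).1
  -- extension to supersets
  have hext : ∀ (p : P) (Y : Finset W), Y.card ≤ N → ∃ μ : W → K,
      (∀ a ∈ Cl R t N p.1.2, μ a = p.1.1 a) ∧ Set.InjOn μ (Cl R t N p.1.2) ∧
      (∀ y ∈ Y, Set.InjOn μ (Cl R t N y)) ∧ Set.InjOn μ Y := by
    intro p Y hY
    have hX : (Cl R t N p.1.2 ∪ ⋃ y ∈ Y, Cl R t N y).encard ≤ Fintype.card K := by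
      refine (Set.encard_union_le _ _).trans ?_
      refine (add_le_add (hM _) (encard_biUnion_bound Y _ M (fun y _ => hM y))).trans ?_
      rw [hK]
      norm_cast
      have := Nat.mul_le_mul_right M hY
      omega
    obtain ⟨μ, h1, h2⟩ := extend_naming p.1.1 _ _ p.2 Set.subset_union_left hX
    have hsub : ∀ y ∈ Y, Cl R t N y ⊆ Cl R t N p.1.2 ∪ ⋃ y ∈ Y, Cl R t N y := by
      intro y hy z hz
      right
      simp only [Set.mem_iUnion]
      exact ⟨y, hy, hz⟩
    exact ⟨μ, h2, h1.mono Set.subset_union_left, fun y hy => h1.mono (hsub y hy),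
      h1.mono (fun y hy => hsub y hy (Cl_self y))⟩
  have hcong : ∀ (p : P) (μ : W → K), (∀ a ∈ Cl R t N p.1.2, μ a = p.1.1 a) →
      cd R t N μ p.1.2 = cP p := fun p μ h =>
    code_congr Cl_self RS_sub_Cl Cl_trans h
  -- relation in B from relation on namings
  have hRB : ∀ (c : B) (μ : W → K) (_ : ∀ a ∈ Cl R t N (rep c).1.2, μ a = (rep c).1.1 a)
      (hi : Set.InjOn μ (Cl R t N (rep c).1.2)) (y : W) (hy : Set.InjOn μ (Cl R t N y)),
      (R (rep c).1.2 y → RB c (mk ⟨(μ, y), hy⟩)) ∧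
      (R y (rep c).1.2 → RB (mk ⟨(μ, y), hy⟩) c) := by
    intro c μ hμ hi y hy
    have e1 := hcong (rep c) μ hμ
    have e2 := hmk ⟨(μ, y), hy⟩
    constructor
    · intro h
      exact RP_congr (p := (μ, (rep c).1.2)) (q := (μ, y)) hi hy (rep c).2 (rep _).2 e1 e2.symm
        (RP_of_R htr μ h)
    · intro h
      exact RP_congr (q := (μ, (rep c).1.2)) (p := (μ, y)) hy hi (rep _).2 (rep c).2 e2.symm e1
        (RP_of_R htr μ h)
  refine ⟨B, RB, fun c => (rep c).1.2, ?_, fun x y z => RP_trans, ?_, ?_, ?_⟩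
  · exact Subtype.finite
  · intro w
    have hX : (Cl R t N w).encard ≤ Fintype.card K := by
      refine (hM w).trans ?_
      rw [hK]
      norm_cast
      omega
    obtain ⟨μ, h1, -⟩ := extend_naming (fun _ : W => (⟨0, Nat.succ_pos _⟩ : K)) ∅ _
      (Set.injOn_empty _) (Set.empty_subset _) hX
    exact ⟨mk ⟨(μ, w), h1⟩, ht _⟩
  · intro c Q n hn
    set x := (rep c).1.2 with hx
    -- pushing successors forward
    have push : ∀ s : Finset W, s.card ≤ N → (∀ v ∈ s, R x v ∧ t v ∈ Q) →
        ∃ s' : Finset B, s.card ≤ s'.card ∧ ∀ d ∈ s', RB c d ∧ t (rep d).1.2 ∈ Q := by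
      intro s hs hsQ
      obtain ⟨μ, h1, h2, h3, h4⟩ := hext (rep c) s hs
      refine ⟨s.attach.image (fun y => mk ⟨(μ, y.1), h3 y.1 y.2⟩), ?_, ?_⟩
      · rw [Finset.card_image_of_injective, Finset.card_attach]
        intro y z hyz
        have : μ y.1 = μ z.1 := congrArg (fun b : B => b.1.1.1) hyz
        exact Subtype.ext (h4 y.2 z.2 this)
      · intro d hd
        obtain ⟨y, -, rfl⟩ := Finset.mem_image.1 hd
        refine ⟨(hRB c μ h1 h2 y.1 (h3 y.1 y.2)).1 (hsQ y.1 y.2).1, ?_⟩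
        rw [ht]
        exact (hsQ y.1 y.2).2
    constructor
    · rintro ⟨s, hs, hsQ⟩
      by_cases hr : Q ⊆ Rare R t N x
      · have hpre : ∀ d ∈ s, ∃ v, (R x v ∧ t v ∈ Q) ∧ cd R t N (rep c).1.1 v = d.1 := by
          intro d hd
          obtain ⟨h1, h2⟩ := hsQ d hd
          obtain ⟨v, hv, hvd⟩ := h1.2.2.2.1 (hr h2)
          have hvd' : cd R t N (rep c).1.1 v = d.1 := hvd.trans (hrep d)
          refine ⟨v, ⟨hv.1, ?_⟩, hvd'⟩
          have : t v = t (rep d).1.2 := congrArg (fun c => c.1.2.1.1) hvd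
          rw [this]
          exact h2
        choose! g hg1 hg2 using hpre
        refine ⟨s.image g, ?_, ?_⟩
        · rw [Finset.card_image_of_injOn]
          · exact hs
          · intro a ha b hb hab
            apply Subtype.ext
            rw [← hg2 a ha, ← hg2 b hb, hab]
        · intro v hv
          obtain ⟨d, hd, rfl⟩ := Finset.mem_image.1 hv
          exact hg1 d hd
      · obtain ⟨l, hlQ, hl⟩ := Set.not_subset.1 hr
        have hl' : (N : ℕ∞) ≤ {v | R x v ∧ t v = l}.encard := not_lt.1 hl
        obtain ⟨u, hu, huc⟩ := Set.exists_subset_encard_eq hl'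
        have huf : u.Finite := Set.finite_of_encard_eq_coe huc
        refine ⟨huf.toFinset, ?_, ?_⟩
        · rw [huf.encard_eq_coe_toFinset_card] at huc
          have : huf.toFinset.card = N := by exact_mod_cast huc
          omega
        · intro v hv
          have := hu (huf.mem_toFinset.1 hv)
          exact ⟨this.1, this.2 ▸ hlQ⟩
    · rintro ⟨s, hs, hsQ⟩
      obtain ⟨s0, hs0, hc0⟩ := Finset.exists_subset_card_eq hs
      obtain ⟨s', h1, h2⟩ := push s0 (by omega) (fun v hv => hsQ v (hs0 hv))
      exact ⟨s', by omega, h2⟩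
  · intro c l
    constructor
    · rintro ⟨d, hd, rfl⟩
      exact hd.1
    · rintro ⟨v, hv, rfl⟩
      obtain ⟨μ, h1, h2, h3, -⟩ := hext (rep c) {v} (by simpa using hN)
      have h4 := h3 v (Finset.mem_singleton_self v)
      exact ⟨mk ⟨(μ, v), h4⟩, (hRB c μ h1 h2 v h4).2 hv, ht _⟩

end Core

/-- Subformulas. -/
def sub : MF → Set MF
  | .var p => {.var p}
  | .neg φ => insert (.neg φ) (sub φ)
  | .and φ ψ => insert (.and φ ψ) (sub φ ∪ sub ψ)
  | .dia n φ => insert (.dia n φ) (sub φ)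
  | .conv φ => insert (.conv φ) (sub φ)

/-- A bound on the grades. -/
def grade : MF → ℕ
  | .var _ => 1
  | .neg φ => grade φ
  | .and φ ψ => max (grade φ) (grade ψ)
  | .dia n φ => max n (grade φ)
  | .conv φ => grade φ

lemma sub_finite (φ : MF) : (sub φ).Finite := by
  induction φ with
  | var p => exact Set.finite_singleton _
  | neg φ ih => exact ih.insert _
  | and φ ψ ih1 ih2 => exact (ih1.union ih2).insert _
  | dia n φ ih => exact ih.insert _
  | conv φ ih => exact ih.insert _

lemma sub_self (φ : MF) : φ ∈ sub φ := by
  cases φ <;> simp [sub]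

lemma grade_pos (φ : MF) : 1 ≤ grade φ := by
  induction φ with
  | var p => exact le_refl _
  | neg φ ih => exact ih
  | and φ ψ ih1 ih2 => exact ih1.trans (le_max_left _ _)
  | dia n φ ih => exact ih.trans (le_max_right _ _)
  | conv φ ih => exact ih

/-- Truth transfer along a label-preserving map. -/
lemma transfer {W : Type*} {R : W → W → Prop} {V : ℕ → Set W} (Φ : Set MF) (N : ℕ)
    {B : Type} (RB : B → B → Prop) (h : B → W)
    (t : W → (Φ → Prop)) (ht : ∀ w χ, t w χ ↔ Sat R V χ.1 w)
    (H1 : ∀ c, ∀ Q : Set (Φ → Prop), ∀ n ≤ N,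
        ((∃ s : Finset B, n ≤ s.card ∧ ∀ d ∈ s, RB c d ∧ t (h d) ∈ Q) ↔
          ∃ s : Finset W, n ≤ s.card ∧ ∀ v ∈ s, R (h c) v ∧ t v ∈ Q))
    (H2 : ∀ c l, (∃ d, RB d c ∧ t (h d) = l) ↔ ∃ v, R v (h c) ∧ t v = l)
    (ψ : MF) (hψ : sub ψ ⊆ Φ) (hg : grade ψ ≤ N) (c : B) :
    Sat RB (fun p => h ⁻¹' V p) ψ c ↔ Sat R V ψ (h c) := by
  induction ψ generalizing c with
  | var p => exact Iff.rfl
  | neg ψ ih => exact not_congr (ih ((Set.subset_insert _ _).trans hψ) hg c)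
  | and ψ χ ih1 ih2 =>
    have h0 := (Set.subset_insert _ _).trans hψ
    exact and_congr (ih1 (Set.subset_union_left.trans h0) ((le_max_left _ _).trans hg) c)
      (ih2 (Set.subset_union_right.trans h0) ((le_max_right _ _).trans hg) c)
  | dia n ψ ih =>
    have h0 := (Set.subset_insert _ _).trans hψ
    have ih' := ih h0 ((le_max_right _ _).trans hg)
    have := H1 c {l | l ⟨ψ, h0 (sub_self ψ)⟩} n ((le_max_left _ _).trans hg)
    simpa only [Sat, ih', Set.mem_ofPred_eq, ht] using this
  | conv ψ ih =>
    have h0 := (Set.subset_insert _ _).trans hψ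
    have ih' := ih h0 hg
    simp only [Sat, ih']
    constructor
    · rintro ⟨d, hd, hs⟩
      obtain ⟨v, hv, hvt⟩ := (H2 c (t (h d))).1 ⟨d, hd, rfl⟩
      refine ⟨v, hv, ?_⟩
      rw [← ht v ⟨ψ, h0 (sub_self ψ)⟩, hvt, ht]
      exact hs
    · rintro ⟨v, hv, hs⟩
      obtain ⟨d, hd, hdt⟩ := (H2 c (t v)).2 ⟨v, hv, rfl⟩
      refine ⟨d, hd, ?_⟩
      rw [← ht (h d) ⟨ψ, h0 (sub_self ψ)⟩, hdt, ht]
      exact hs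

end K4FMP

theorem k4_local_finite_model_property (φ : MF)
    (h : ∃ (W : Type v) (R : W → W → Prop) (V : ℕ → Set W),
      (∀ x y z : W, R x y → R y z → R x z) ∧ (∃ w : W, Sat R V φ w)) :
    ∃ (W : Type) (R : W → W → Prop) (V : ℕ → Set W),
      Finite W ∧ (∀ x y z : W, R x y → R y z → R x z) ∧ (∃ w : W, Sat R V φ w) := by
  obtain ⟨W, R, V, htr, w, hw⟩ := h
  have : Nonempty W := ⟨w⟩
  have : Finite (K4FMP.sub φ) := K4FMP.sub_finite φ
  let t : W → (K4FMP.sub φ → Prop) := fun w χ => Sat R V χ.1 w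
  obtain ⟨B, RB, h, hfin, htrB, hsurj, H1, H2⟩ :=
    K4FMP.core (t := t) (N := K4FMP.grade φ) htr (K4FMP.grade_pos φ)
  refine ⟨B, RB, fun p => h ⁻¹' V p, hfin, htrB, ?_⟩
  obtain ⟨c, hc⟩ := hsurj w
  refine ⟨c, (K4FMP.transfer (K4FMP.sub φ) (K4FMP.grade φ) RB h t (fun _ _ => Iff.rfl) H1 H2 φ
    (le_refl _) (le_refl _) c).2 ?_⟩
  have h2 : t (h c) ⟨φ, K4FMP.sub_self φ⟩ := by
    rw [hc]
    exact hw
  exact h2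
end

section
/- The logic D4(⋄≥, ⟟) has the local finite model property: if a formula φ of the modal language (⋄≥, ⟟) is satisfied at some world of some Kripke structure whose accessibility relation is serial and transitive, then φ is satisfied at some world of some Kripke structure with a finite universe whose accessibility relation is serial and transitive. -/
universe v

namespace D4

open Relation

section Frame

variable {W : Type v} (R : W → W → Prop) {T : Type} (tp : W → T) (N : ℕ)

/-- `R`-successors of type `t`. -/
def succs (t : T) (x : W) : Set W := {y | R x y ∧ tp y = t}

/-- The type `t` is rare at `x`. -/
def rare (t : T) (x : W) : Prop := (succs R tp t x).encard < (N : ℕ∞)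

/-- `y` is a rare successor (a king) of `x`. -/
def Kr (x y : W) : Prop := R x y ∧ rare R tp N (tp y) x

/-- Hereditary kings. -/
def H (x : W) : Set W := {y | ReflTransGen (Kr R tp N) x y}

variable {C : ℕ}

/-- Local description of a world under a colouring. -/
def loc (γ : W → Fin C) (k : W) : Fin C × T × Set T × Set (Fin C) :=
  (γ k, tp k, {t | rare R tp N t k}, γ '' {y | Kr R tp N k y})

/-- The code of a world under a colouring. -/
def code (γ : W → Fin C) (x : W) : Fin C × Set (Fin C × T × Set T × Set (Fin C)) :=
  (γ x, loc R tp N γ '' H R tp N x)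

theorem self_mem_H (x : W) : x ∈ H R tp N x := ReflTransGen.refl

theorem H_subset {x y : W} (h : y ∈ H R tp N x) : H R tp N y ⊆ H R tp N x :=
  fun _ hz => ReflTransGen.trans h hz

theorem kr_mem_H {x y : W} (h : Kr R tp N x y) : y ∈ H R tp N x := ReflTransGen.single h

variable {R tp N}

theorem code_loc {γ δ : W → Fin C} {x y : W} (hδ : Set.InjOn δ (H R tp N y))
    (h : code R tp N γ x = code R tp N δ y) : loc R tp N γ x = loc R tp N δ y := by
  have h1 : γ x = δ y := congrArg Prod.fst h
  have h2 : loc R tp N γ '' H R tp N x = loc R tp N δ '' H R tp N y := congrArg Prod.snd h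
  have h3 : loc R tp N γ x ∈ loc R tp N δ '' H R tp N y := by
    rw [← h2]; exact ⟨x, self_mem_H R tp N x, rfl⟩
  obtain ⟨j, hj, hjx⟩ := h3
  have h4 : δ j = γ x := congrArg Prod.fst hjx
  have : j = y := hδ hj (self_mem_H R tp N y) (h4.trans h1)
  rw [← hjx, this]

/-- One inclusion between the hereditary descriptions. -/
theorem loc_incl {γ δ : W → Fin C} {x y : W}
    (hδ : Set.InjOn δ (H R tp N y))
    (h : loc R tp N γ '' H R tp N x ⊆ loc R tp N δ '' H R tp N y)
    {k l : W} (hk : k ∈ H R tp N x) (hl : l ∈ H R tp N y)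
    (hkl : loc R tp N γ k = loc R tp N δ l) :
    loc R tp N γ '' H R tp N k ⊆ loc R tp N δ '' H R tp N l := by
  rintro _ ⟨j, hj, rfl⟩
  induction hj with
  | refl => exact ⟨l, self_mem_H R tp N l, hkl.symm⟩
  | @tail j i hj hji ih =>
    obtain ⟨j', hj', e⟩ := ih
    have e2 : δ '' {y | Kr R tp N j' y} = γ '' {y | Kr R tp N j y} :=
      congrArg (fun p => p.2.2.2) e
    have : γ i ∈ δ '' {y | Kr R tp N j' y} := by rw [e2]; exact ⟨i, hji, rfl⟩
    obtain ⟨i', hi', ei⟩ := this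
    have hiH : i ∈ H R tp N x := H_subset R tp N hk (ReflTransGen.tail hj hji)
    obtain ⟨i2, hi2, ei2⟩ := h ⟨i, hiH, rfl⟩
    have hi'l : i' ∈ H R tp N l := ReflTransGen.tail hj' hi'
    have e3 : δ i2 = γ i := congrArg Prod.fst ei2
    have : i2 = i' := hδ hi2 (H_subset R tp N hl hi'l) (e3.trans ei.symm)
    subst this
    exact ⟨i2, hi'l, ei2⟩

theorem code_king {γ δ : W → Fin C} {x y : W}
    (hγ : Set.InjOn γ (H R tp N x)) (hδ : Set.InjOn δ (H R tp N y))
    (h : code R tp N γ x = code R tp N δ y) {k : W} (hk : Kr R tp N x k) :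
    ∃ l, Kr R tp N y l ∧ code R tp N γ k = code R tp N δ l := by
  have h0 := code_loc hδ h
  have h2 : loc R tp N γ '' H R tp N x = loc R tp N δ '' H R tp N y := congrArg Prod.snd h
  have e2 : γ '' {y | Kr R tp N x y} = δ '' {z | Kr R tp N y z} :=
    congrArg (fun p => p.2.2.2) h0
  have : γ k ∈ δ '' {z | Kr R tp N y z} := by rw [← e2]; exact ⟨k, hk, rfl⟩
  obtain ⟨l, hl, el⟩ := this
  have hkH := kr_mem_H R tp N hk
  have hlH := kr_mem_H R tp N hl
  have : loc R tp N γ k ∈ loc R tp N δ '' H R tp N y := by rw [← h2]; exact ⟨k, hkH, rfl⟩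
  obtain ⟨l2, hl2, e⟩ := this
  have e3 : δ l2 = γ k := congrArg Prod.fst e
  have : l2 = l := hδ hl2 hlH (e3.trans el.symm)
  subst this
  refine ⟨l2, hl, Prod.ext el.symm (Set.Subset.antisymm ?_ ?_)⟩
  · exact loc_incl hδ h2.le hkH hlH e.symm
  · exact loc_incl hγ h2.ge hlH hkH e

theorem code_congr {γ δ : W → Fin C} {x : W} (h : Set.EqOn γ δ (H R tp N x)) :
    code R tp N γ x = code R tp N δ x := by
  refine Prod.ext (h (self_mem_H R tp N x)) (Set.image_congr fun k hk => ?_)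
  have h1 : γ '' {y | Kr R tp N k y} = δ '' {y | Kr R tp N k y} :=
    Set.image_congr fun z hz => h (H_subset R tp N hk (kr_mem_H R tp N hz))
  simp only [loc, h hk, h1]

/-- Colour extension. -/
theorem extend_col {γ : W → Fin C} {A : Set W} (hγ : Set.InjOn γ A) (hA : A.Finite) {B : Set W}
    (hB : B.Finite) (hc : (A ∪ B).ncard ≤ C) :
    ∃ δ : W → Fin C, Set.EqOn γ δ A ∧ Set.InjOn δ (A ∪ B) := by
  classical
  induction B, hB using Set.Finite.induction_on with
  | empty => exact ⟨γ, fun _ _ => rfl, by simpa using hγ⟩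
  | @insert b B hb hB ih =>
    have hfin : (A ∪ insert b B).Finite := hA.union (hB.insert b)
    obtain ⟨δ, h1, h2⟩ := ih ((Set.ncard_le_ncard (by grind) hfin).trans hc)
    by_cases hbA : b ∈ A ∪ B
    · refine ⟨δ, h1, ?_⟩
      rwa [Set.union_insert, Set.insert_eq_of_mem hbA]
    · rw [Set.union_insert, Set.ncard_insert_of_notMem hbA (hA.union hB)] at hc
      have : ∃ c : Fin C, c ∉ δ '' (A ∪ B) := by
        by_contra! hcon
        have hu : δ '' (A ∪ B) = Set.univ := Set.eq_univ_of_forall hcon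
        have h3 := Set.ncard_image_le (f := δ) (hA.union hB)
        rw [hu, Set.ncard_univ, Nat.card_eq_fintype_card, Fintype.card_fin] at h3
        omega
      obtain ⟨c, hcn⟩ := this
      have hne : ∀ a ∈ A ∪ B, Function.update δ b c a = δ a := by
        intro a ha
        exact Function.update_of_ne (fun h : a = b => hbA (h ▸ ha)) _ _
      refine ⟨Function.update δ b c, fun a ha => ?_, ?_⟩
      · rw [hne a (Or.inl ha)]; exact h1 ha
      · rw [Set.union_insert, Set.injOn_insert hbA]
        refine ⟨h2.congr fun a ha => (hne a ha).symm, ?_⟩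
        rintro ⟨a, ha, e⟩
        rw [hne a ha, Function.update_self] at e
        exact hcn ⟨a, ha, e⟩

/-- Monotonicity. -/
theorem succs_mono (hR : ∀ x y z, R x y → R y z → R x z) {x y : W} (h : R x y) (t : T) :
    succs R tp t y ⊆ succs R tp t x := fun _ hz => ⟨hR _ _ _ h hz.1, hz.2⟩

theorem rare_mono (hR : ∀ x y z, R x y → R y z → R x z) {x y : W} (h : R x y) {t : T}
    (ht : rare R tp N t x) : rare R tp N t y :=
  lt_of_le_of_lt (Set.encard_le_encard (succs_mono hR h t)) ht

variable (R tp N) in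
/-- Truncated counts. -/
noncomputable def cnt (t : T) (x : W) : ℕ := (min (N : ℕ∞) (succs R tp t x).encard).toNat

theorem cnt_coe (t : T) (x : W) :
    (cnt R tp N t x : ℕ∞) = min (N : ℕ∞) (succs R tp t x).encard := by
  unfold cnt
  apply ENat.coe_toNat
  exact ne_top_of_le_ne_top (ENat.coe_ne_top N) (min_le_left _ _)

theorem cnt_mono (hR : ∀ x y z, R x y → R y z → R x z) {x y : W} (h : R x y) (t : T) :
    cnt R tp N t y ≤ cnt R tp N t x := by
  have : (cnt R tp N t y : ℕ∞) ≤ cnt R tp N t x := by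
    rw [cnt_coe, cnt_coe]
    exact min_le_min le_rfl (Set.encard_le_encard (succs_mono hR h t))
  exact_mod_cast this

/-- If the counts agree, the kings agree. -/
theorem kr_of_cnt (hR : ∀ x y z, R x y → R y z → R x z) {x y : W} (h : R x y)
    (hc : ∀ t, cnt R tp N t y = cnt R tp N t x) {z : W} (hz : Kr R tp N y z) :
    Kr R tp N x z := by
  refine ⟨hR _ _ _ h hz.1, ?_⟩
  have h1 := hz.2
  have h2 : (cnt R tp N (tp z) y : ℕ∞) = cnt R tp N (tp z) x := by rw [hc]
  rw [cnt_coe, cnt_coe, min_eq_right h1.le] at h2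
  unfold rare at *
  by_contra! hcon
  rw [min_eq_left hcon] at h2
  rw [h2] at h1
  exact lt_irrefl _ h1

variable [Fintype T]

variable (R tp N) in
/-- Total truncated count. -/
noncomputable def mu (x : W) : ℕ := ∑ t : T, cnt R tp N t x

theorem mu_mono (hR : ∀ x y z, R x y → R y z → R x z) {x y : W} (h : R x y) :
    mu R tp N y ≤ mu R tp N x := Finset.sum_le_sum fun t _ => cnt_mono hR h t

theorem cnt_of_mu (hR : ∀ x y z, R x y → R y z → R x z) {x y : W} (h : R x y)
    (hm : mu R tp N y = mu R tp N x) (t : T) : cnt R tp N t y = cnt R tp N t x :=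
  (Finset.sum_eq_sum_iff_of_le fun t _ => cnt_mono hR h t).1 hm t (Finset.mem_univ t)

theorem kings_finite (x : W) : {y | Kr R tp N x y}.Finite ∧
    {y | Kr R tp N x y}.ncard ≤ Fintype.card T * N := by
  classical
  let f : T → Set W := fun t => {y | Kr R tp N x y ∧ tp y = t}
  have hf : ∀ t, (f t).encard ≤ N := by
    intro t
    by_cases ht : rare R tp N t x
    · exact (Set.encard_le_encard (fun y hy => ⟨hy.1.1, hy.2⟩ : f t ⊆ succs R tp t x)).trans ht.le
    · have : f t = ∅ := by
        ext y; simp only [f, Set.mem_setOf_eq, Set.mem_empty_iff_false, iff_false]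
        rintro ⟨h1, rfl⟩; exact ht h1.2
      rw [this]; simp
  have hff : ∀ t, (f t).Finite := fun t => Set.finite_of_encard_le_coe (hf t)
  have he : {y | Kr R tp N x y} = ⋃ t ∈ (Finset.univ : Finset T), f t := by
    ext y; simp [f]
  constructor
  · rw [he]; exact Set.Finite.biUnion (Finset.finite_toSet _) fun t _ => hff t
  · rw [he]
    refine (Finset.set_ncard_biUnion_le _ _).trans ?_
    refine (Finset.sum_le_card_nsmul _ _ N fun t _ => ?_).trans (by simp)
    have := hf t
    rw [← (hff t).cast_ncard_eq] at this
    exact_mod_cast this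

theorem H_bound_aux (hR : ∀ x y z, R x y → R y z → R x z) (n : ℕ) :
    ∃ M, ∀ x, mu R tp N x ≤ n → (H R tp N x).Finite ∧ (H R tp N x).ncard ≤ M := by
  classical
  have key : ∀ x, H R tp N x ⊆ insert x ({y | Kr R tp N x y} ∪
      ⋃ k ∈ {k | Kr R tp N x k ∧ mu R tp N k < mu R tp N x}, H R tp N k) := by
    intro x z hz
    induction hz with
    | refl => exact Or.inl rfl
    | @tail z z' _ hzz ih =>
      rcases ih with rfl | hk | hk
      · exact Or.inr (Or.inl hzz)
      · have hxz : R x z := hk.1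
        rcases (mu_mono (tp := tp) (N := N) hR hxz).lt_or_eq with hlt | heq
        · refine Or.inr (Or.inr ?_)
          simp only [Set.mem_iUnion]
          exact ⟨z, ⟨hk, hlt⟩, kr_mem_H R tp N hzz⟩
        · exact Or.inr (Or.inl (kr_of_cnt hR hxz (cnt_of_mu hR hxz heq) hzz))
      · simp only [Set.mem_iUnion] at hk
        obtain ⟨k, hk1, hk2⟩ := hk
        refine Or.inr (Or.inr ?_)
        simp only [Set.mem_iUnion]
        exact ⟨k, hk1, ReflTransGen.tail hk2 hzz⟩
  have main : ∀ (M : ℕ) (x : W), (∀ k, mu R tp N k < mu R tp N x →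
      (H R tp N k).Finite ∧ (H R tp N k).ncard ≤ M) → (H R tp N x).Finite ∧
      (H R tp N x).ncard ≤ (Fintype.card T * N + Fintype.card T * N * M) + 1 := by
    intro M x hM
    obtain ⟨hf, hcard⟩ := kings_finite (R := R) (tp := tp) (N := N) x
    have hsf : {k | Kr R tp N x k ∧ mu R tp N k < mu R tp N x}.Finite :=
      hf.subset fun k hk => hk.1
    have hU : (⋃ k ∈ {k | Kr R tp N x k ∧ mu R tp N k < mu R tp N x}, H R tp N k).Finite :=
      hsf.biUnion fun k hk => (hM k hk.2).1
    have hUc : (⋃ k ∈ {k | Kr R tp N x k ∧ mu R tp N k < mu R tp N x}, H R tp N k).ncard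
        ≤ Fintype.card T * N * M := by
      have h1 : (⋃ k ∈ {k | Kr R tp N x k ∧ mu R tp N k < mu R tp N x}, H R tp N k)
          = ⋃ k ∈ hsf.toFinset, H R tp N k := by simp
      rw [h1]
      refine (Finset.set_ncard_biUnion_le _ _).trans ?_
      refine (Finset.sum_le_card_nsmul _ _ M fun k hk => ?_).trans ?_
      · exact (hM k (by simpa using ((Set.Finite.mem_toFinset hsf).1 hk).2)).2
      · rw [smul_eq_mul]
        refine Nat.mul_le_mul_right M ?_
        rw [← Set.ncard_eq_toFinset_card _ hsf]
        exact (Set.ncard_le_ncard (fun k hk => hk.1) hf).trans hcard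
    have hall := (hf.union hU).insert x
    refine ⟨hall.subset (key x), (Set.ncard_le_ncard (key x) hall).trans ?_⟩
    refine (Set.ncard_insert_le _ _).trans ?_
    have := Set.ncard_union_le {y | Kr R tp N x y}
      (⋃ k ∈ {k | Kr R tp N x k ∧ mu R tp N k < mu R tp N x}, H R tp N k)
    omega
  induction n with
  | zero => exact ⟨_, fun x hx => main 0 x fun k hk => by omega⟩
  | succ n ih =>
    obtain ⟨M, hM⟩ := ih
    exact ⟨_, fun x hx => main M x fun k hk => hM k (by omega)⟩

theorem H_bound (hR : ∀ x y z, R x y → R y z → R x z) :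
    ∃ M, ∀ x, (H R tp N x).Finite ∧ (H R tp N x).ncard ≤ M := by
  obtain ⟨M, hM⟩ := H_bound_aux (tp := tp) (N := N) hR (Fintype.card T * N)
  refine ⟨M, fun x => hM x ?_⟩
  refine (Finset.sum_le_card_nsmul _ _ N fun t _ => ?_).trans (by simp)
  have : (cnt R tp N t x : ℕ∞) ≤ N := by rw [cnt_coe]; exact min_le_left _ _
  exact_mod_cast this

end Frame

/-- Subformulas. -/
def sub : MF → Set MF
  | .var p => {.var p}
  | .neg φ => insert (.neg φ) (sub φ)
  | .and φ ψ => insert (.and φ ψ) (sub φ ∪ sub ψ)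
  | .dia n φ => insert (.dia n φ) (sub φ)
  | .conv φ => insert (.conv φ) (sub φ)

theorem sub_finite (φ : MF) : (sub φ).Finite := by
  induction φ with
  | var p => exact Set.finite_singleton _
  | neg φ ih => exact ih.insert _
  | and φ ψ ih1 ih2 => exact (ih1.union ih2).insert _
  | dia n φ ih => exact ih.insert _
  | conv φ ih => exact ih.insert _

theorem self_mem_sub (φ : MF) : φ ∈ sub φ := by
  cases φ <;> simp [sub]

/-- Largest grade. -/
def deg : MF → ℕ
  | .var _ => 0
  | .neg φ => deg φ
  | .and φ ψ => max (deg φ) (deg ψ)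
  | .dia n φ => max n (deg φ)
  | .conv φ => deg φ

section Model

variable {W : Type v} (R : W → W → Prop) (V : ℕ → Set W) (S : Set MF) (N C : ℕ)

/-- The type of a world: formulas true there, and formulas true at some predecessor. -/
def typ (x : W) : Set S × Set S :=
  ({ψ | Sat R V ψ.1 x}, {ψ | ∃ v, R v x ∧ Sat R V ψ.1 v})

/-- Coloured worlds. -/
abbrev P : Type v := {p : W × (W → Fin C) // Set.InjOn p.2 (H R (typ R V S) N p.1)}

/-- Code of a coloured world. -/
def cd (p : P R V S N C) := code R (typ R V S) N p.1.2 p.1.1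

/-- The relation between coloured worlds. -/
structure E (p q : P R V S N C) : Prop where
  h1 : ∀ t, rare R (typ R V S) N t p.1.1 → rare R (typ R V S) N t q.1.1
  h2 : (typ R V S p.1.1).1 ∪ (typ R V S p.1.1).2 ⊆ (typ R V S q.1.1).2
  h3 : ∀ k, Kr R (typ R V S) N q.1.1 k → rare R (typ R V S) N (typ R V S k) p.1.1 →
    ∃ l, Kr R (typ R V S) N p.1.1 l ∧
      code R (typ R V S) N q.1.2 k = code R (typ R V S) N p.1.2 l
  h4 : rare R (typ R V S) N (typ R V S q.1.1) p.1.1 →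
    ∃ l, Kr R (typ R V S) N p.1.1 l ∧ cd R V S N C q = code R (typ R V S) N p.1.2 l

variable {R V S N C}

/-- Restriction of a coloured world to a hereditary king. -/
def P.king (p : P R V S N C) {k : W} (hk : Kr R (typ R V S) N p.1.1 k) : P R V S N C :=
  ⟨(k, p.1.2), p.2.mono (H_subset _ _ _ (kr_mem_H _ _ _ hk))⟩

theorem cd_typ {p q : P R V S N C} (h : cd R V S N C p = cd R V S N C q) :
    typ R V S p.1.1 = typ R V S q.1.1 :=
  congrArg (fun a => a.2.1) (code_loc q.2 h)

theorem cd_rare {p q : P R V S N C} (h : cd R V S N C p = cd R V S N C q) (t) :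
    rare R (typ R V S) N t p.1.1 ↔ rare R (typ R V S) N t q.1.1 :=
  Set.ext_iff.1 (congrArg (fun a => a.2.2.1) (code_loc q.2 h)) t

theorem E.trans {p q r : P R V S N C} (h : E R V S N C p q) (h' : E R V S N C q r) :
    E R V S N C p r where
  h1 t ht := h'.h1 t (h.h1 t ht)
  h2 := (h.h2.trans Set.subset_union_right).trans h'.h2
  h3 k hk ht := by
    obtain ⟨l, hl, e⟩ := h'.h3 k hk (h.h1 _ ht)
    have et : typ R V S k = typ R V S l := cd_typ (p := r.king hk) (q := q.king hl) e
    obtain ⟨m, hm, e'⟩ := h.h3 l hl (et ▸ ht)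
    exact ⟨m, hm, e.trans e'⟩
  h4 ht := by
    obtain ⟨l, hl, e⟩ := h'.h4 (h.h1 _ ht)
    have et : typ R V S r.1.1 = typ R V S l := cd_typ (p := r) (q := q.king hl) e
    obtain ⟨m, hm, e'⟩ := h.h3 l hl (et ▸ ht)
    exact ⟨m, hm, e.trans e'⟩

theorem E.congr {p q p' q' : P R V S N C} (h : E R V S N C p q)
    (hp : cd R V S N C p = cd R V S N C p') (hq : cd R V S N C q = cd R V S N C q') :
    E R V S N C p' q' where
  h1 t ht := (cd_rare hq t).1 (h.h1 t ((cd_rare hp t).2 ht))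
  h2 := by rw [← cd_typ hp, ← cd_typ hq]; exact h.h2
  h3 k hk ht := by
    obtain ⟨l, hl, e⟩ := code_king q'.2 q.2 hq.symm hk
    have et : typ R V S k = typ R V S l := cd_typ (p := q'.king hk) (q := q.king hl) e
    obtain ⟨m, hm, e'⟩ := h.h3 l hl ((cd_rare hp _).2 (et ▸ ht))
    obtain ⟨m', hm', e''⟩ := code_king p.2 p'.2 hp hm
    exact ⟨m', hm', e.trans (e'.trans e'')⟩
  h4 ht := by
    obtain ⟨m, hm, e'⟩ := h.h4 ((cd_rare hp _).2 ((cd_typ hq).symm ▸ ht))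
    obtain ⟨m', hm', e''⟩ := code_king p.2 p'.2 hp hm
    exact ⟨m', hm', hq.symm.trans (e'.trans e'')⟩

theorem E_of_R (hR : ∀ x y z, R x y → R y z → R x z) {x y : W} (h : R x y) (γ : W → Fin C)
    (hx : Set.InjOn γ (H R (typ R V S) N x)) (hy : Set.InjOn γ (H R (typ R V S) N y)) :
    E R V S N C ⟨(x, γ), hx⟩ ⟨(y, γ), hy⟩ where
  h1 _ ht := rare_mono hR h ht
  h2 := by
    rintro ψ (hψ | ⟨v, hv, hψ⟩)
    · exact ⟨x, h, hψ⟩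
    · exact ⟨v, hR _ _ _ hv h, hψ⟩
  h3 k hk ht := ⟨k, ⟨hR _ _ _ h hk.1, ht⟩, rfl⟩
  h4 ht := ⟨y, ⟨h, ht⟩, rfl⟩

variable (R V S N C)

/-- Worlds of the finite model. -/
abbrev Wf : Type := Set.range (cd R V S N C)

/-- Accessibility of the finite model. -/
def Rf (a b : Wf R V S N C) : Prop :=
  ∃ p q, cd R V S N C p = a.1 ∧ cd R V S N C q = b.1 ∧ E R V S N C p q

/-- Valuation of the finite model. -/
def Vf (i : ℕ) : Set (Wf R V S N C) := {a | ∃ p, cd R V S N C p = a.1 ∧ p.1.1 ∈ V i}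

/-- The world given by a coloured world. -/
def mk (p : P R V S N C) : Wf R V S N C := ⟨cd R V S N C p, p, rfl⟩

variable {R V S N C}

theorem Rf_mk {p q : P R V S N C} :
    Rf R V S N C (mk R V S N C p) (mk R V S N C q) ↔ E R V S N C p q := by
  constructor
  · rintro ⟨p', q', hp, hq, h⟩
    exact h.congr hp hq
  · intro h; exact ⟨p, q, rfl, rfl, h⟩

theorem mk_surj (a : Wf R V S N C) : ∃ p, mk R V S N C p = a := by
  obtain ⟨_, p, rfl⟩ := a; exact ⟨p, rfl⟩

/-- Forward witnesses. -/
theorem forward (hR : ∀ x y z, R x y → R y z → R x z) {M : ℕ}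
    (hM : ∀ x, (H R (typ R V S) N x).Finite ∧ (H R (typ R V S) N x).ncard ≤ M)
    (p : P R V S N C) (s : Finset W) (hs : ∀ y ∈ s, R p.1.1 y) (hC : M + s.card * M ≤ C) :
    ∃ f : W → Wf R V S N C, Set.InjOn f s ∧ ∀ y ∈ s, Rf R V S N C (mk R V S N C p) (f y) ∧
      ∃ q : P R V S N C, f y = mk R V S N C q ∧ q.1.1 = y := by
  classical
  let B : Set W := ⋃ y ∈ s, H R (typ R V S) N y
  have hB : B.Finite := Set.Finite.biUnion (Finset.finite_toSet s) fun y _ => (hM y).1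
  have hBc : B.ncard ≤ s.card * M :=
    (Finset.set_ncard_biUnion_le _ _).trans (Finset.sum_le_card_nsmul _ _ M fun y _ => (hM y).2)
  obtain ⟨δ, h1, h2⟩ := extend_col p.2 (hM p.1.1).1 hB
    ((Set.ncard_union_le _ _).trans ((Nat.add_le_add (hM _).2 hBc).trans hC))
  have hx : Set.InjOn δ (H R (typ R V S) N p.1.1) := h2.mono Set.subset_union_left
  have hy : ∀ y ∈ s, Set.InjOn δ (H R (typ R V S) N y) := fun y hy =>
    h2.mono ((Set.subset_biUnion_of_mem (u := fun y => H R (typ R V S) N y)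
      (show y ∈ (s : Set W) from hy)).trans Set.subset_union_right)
  have e : mk R V S N C p = mk R V S N C ⟨(p.1.1, δ), hx⟩ := Subtype.ext (code_congr h1)
  refine ⟨fun y => if h : y ∈ s then mk R V S N C ⟨(y, δ), hy y h⟩ else mk R V S N C p, ?_, ?_⟩
  · intro y hys z hzs hyz
    have hys' : y ∈ s := hys
    have hzs' : z ∈ s := hzs
    simp only [hys', hzs', dif_pos] at hyz
    have h3 : δ y = δ z := congrArg (fun a => a.1.1) hyz
    refine h2 (Or.inr ?_) (Or.inr ?_) h3
    · exact Set.mem_biUnion hys (self_mem_H _ _ _ y)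
    · exact Set.mem_biUnion hzs (self_mem_H _ _ _ z)
  · intro y hys
    simp only [hys, dif_pos]
    refine ⟨?_, _, rfl, rfl⟩
    rw [e]; apply Rf_mk.2
    exact E_of_R hR (hs y hys) δ hx (hy y hys)

/-- Truth lemma. -/
theorem truth (hR : ∀ x y z, R x y → R y z → R x z) {M : ℕ}
    (hM : ∀ x, (H R (typ R V S) N x).Finite ∧ (H R (typ R V S) N x).ncard ≤ M)
    (hC : M + (N + 1) * M ≤ C) (ψ : MF) (hS : sub ψ ⊆ S) (hN : deg ψ ≤ N) :
    ∀ p : P R V S N C, Sat (Rf R V S N C) (Vf R V S N C) ψ (mk R V S N C p) ↔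
      Sat R V ψ p.1.1 := by
  classical
  have tsat : ∀ χ ∈ S, ∀ {x y : W}, typ R V S x = typ R V S y → Sat R V χ x → Sat R V χ y := by
    intro χ hχ x y hxy hx
    exact (Set.ext_iff.1 (congrArg Prod.fst hxy) ⟨χ, hχ⟩).1 hx
  induction ψ with
  | var i =>
    intro p
    constructor
    · rintro ⟨q, hq, h⟩
      exact tsat (.var i) (hS rfl) (cd_typ hq) h
    · intro h; exact ⟨p, rfl, h⟩
  | neg ψ ih =>
    intro p
    exact not_congr (ih ((Set.subset_insert _ _).trans hS) hN p)
  | and ψ χ ih1 ih2 =>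
    intro p
    exact and_congr
      (ih1 ((Set.subset_union_left.trans (Set.subset_insert _ _)).trans hS)
        ((le_max_left _ _).trans hN) p)
      (ih2 ((Set.subset_union_right.trans (Set.subset_insert _ _)).trans hS)
        ((le_max_right _ _).trans hN) p)
  | dia n ψ ih =>
    intro p
    have hS' : sub ψ ⊆ S := (Set.subset_insert _ _).trans hS
    have ih := ih hS' ((le_max_right _ _).trans hN)
    have hnN : n ≤ N := (le_max_left _ _).trans hN
    have hψ : ψ ∈ S := hS' (self_mem_sub ψ)
    constructor
    · rintro ⟨s, hs, hsat⟩
      by_contra hcon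
      -- every finite set of good successors is small
      have hsmall : ∀ t : Finset W, (∀ v ∈ t, R p.1.1 v ∧ Sat R V ψ v) → t.card < n := by
        intro t ht
        by_contra! h
        exact hcon ⟨t, h, ht⟩
      have henc : ({v | R p.1.1 v ∧ Sat R V ψ v} : Set W).encard < n := by
        by_contra! h
        obtain ⟨t, ht, htc⟩ := Set.exists_subset_encard_eq h
        have htf : t.Finite := Set.finite_of_encard_eq_coe htc
        have := hsmall htf.toFinset fun v hv => ht (by simpa using hv)
        rw [← Set.ncard_eq_toFinset_card t htf, Set.ncard, htc] at this
        simp at this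
      have hk : ∀ a ∈ s, ∃ k, (R p.1.1 k ∧ Sat R V ψ k) ∧
          code R (typ R V S) N p.1.2 k = a.1 := by
        intro a ha
        obtain ⟨q, rfl⟩ := mk_surj a
        obtain ⟨h1, h2⟩ := hsat _ ha
        have hE := Rf_mk.1 h1
        have hq := (ih q).1 h2
        have hr : rare R (typ R V S) N (typ R V S q.1.1) p.1.1 := by
          refine lt_of_le_of_lt (Set.encard_le_encard ?_) (henc.trans_le (by exact_mod_cast hnN))
          intro v hv
          exact ⟨hv.1, tsat ψ hψ hv.2.symm hq⟩
        obtain ⟨l, hl, e⟩ := hE.h4 hr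
        exact ⟨l, ⟨hl.1, tsat ψ hψ (cd_typ (p := q) (q := p.king hl) e) hq⟩, e.symm⟩
      have : Nonempty W := ⟨p.1.1⟩
      choose! f hf1 hf2 using hk
      have hinj : Set.InjOn f (s : Set (Wf R V S N C)) := by
        intro a ha b hb hab
        apply Subtype.ext
        rw [← hf2 a ha, ← hf2 b hb, hab]
      have := hsmall (s.image f) (by
        intro v hv
        obtain ⟨a, ha, rfl⟩ := Finset.mem_image.1 hv
        exact hf1 a ha)
      rw [Finset.card_image_of_injOn hinj] at this
      omega
    · rintro ⟨s0, hs0, hsat0⟩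
      obtain ⟨s, hss, hsc⟩ := Finset.exists_subset_card_eq hs0
      have hsat : ∀ v ∈ s, R p.1.1 v ∧ Sat R V ψ v := fun v hv => hsat0 v (hss hv)
      obtain ⟨f, hf, hf'⟩ := forward hR hM p s (fun y hy => (hsat y hy).1)
        (le_trans (Nat.add_le_add_left (Nat.mul_le_mul_right M (by omega)) M) hC)
      refine ⟨s.image f, by rw [Finset.card_image_of_injOn hf, hsc], ?_⟩
      intro a ha
      obtain ⟨y, hy, rfl⟩ := Finset.mem_image.1 ha
      obtain ⟨h1, q, hq, rfl⟩ := hf' y hy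
      refine ⟨h1, ?_⟩
      rw [hq, ih]
      exact (hsat _ hy).2
  | conv ψ ih =>
    intro p
    have hS' : sub ψ ⊆ S := (Set.subset_insert _ _).trans hS
    have ih := ih hS' hN
    have hψ : ψ ∈ S := hS' (self_mem_sub ψ)
    constructor
    · rintro ⟨a, ha, hsat⟩
      obtain ⟨q, rfl⟩ := mk_surj a
      have hE := Rf_mk.1 ha
      have hq := (ih q).1 hsat
      have : (⟨ψ, hψ⟩ : S) ∈ (typ R V S p.1.1).2 := hE.h2 (Or.inl hq)
      exact this
    · rintro ⟨v, hv, hsat⟩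
      obtain ⟨δ, h1, h2⟩ := extend_col p.2 (hM p.1.1).1 (hM v).1
        ((Set.ncard_union_le _ _).trans ((Nat.add_le_add (hM _).2 (hM v).2).trans
          (le_trans (by nlinarith [Nat.zero_le (N * M)]) hC)))
      have hx : Set.InjOn δ (H R (typ R V S) N p.1.1) := h2.mono Set.subset_union_left
      have hy : Set.InjOn δ (H R (typ R V S) N v) := h2.mono Set.subset_union_right
      have e : mk R V S N C p = mk R V S N C ⟨(p.1.1, δ), hx⟩ := Subtype.ext (code_congr h1)
      refine ⟨mk R V S N C ⟨(v, δ), hy⟩, ?_, (ih _).2 hsat⟩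
      rw [e]; apply Rf_mk.2
      exact E_of_R hR hv δ hy hx

end Model

end D4

theorem d4_local_finite_model_property (φ : MF)
    (h : ∃ (W : Type v) (R : W → W → Prop) (V : ℕ → Set W),
      (∀ w : W, ∃ v : W, R w v) ∧ (∀ x y z : W, R x y → R y z → R x z) ∧
        (∃ w : W, Sat R V φ w)) :
    ∃ (W : Type) (R : W → W → Prop) (V : ℕ → Set W),
      Finite W ∧ (∀ w : W, ∃ v : W, R w v) ∧ (∀ x y z : W, R x y → R y z → R x z) ∧
        (∃ w : W, Sat R V φ w) := by
  classical
  obtain ⟨W, R, V, hser, hR, w, hw⟩ := h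
  have hfin : Finite (D4.sub φ) := (D4.sub_finite φ).to_subtype
  haveI : Fintype (Set (D4.sub φ) × Set (D4.sub φ)) := Fintype.ofFinite _
  obtain ⟨M, hM⟩ := D4.H_bound (R := R) (tp := D4.typ R V (D4.sub φ)) (N := D4.deg φ) hR
  set N := D4.deg φ with hN
  obtain ⟨C, hC, hC1⟩ : ∃ C, M + (N + 1) * M ≤ C ∧ 0 < C :=
    ⟨M + (N + 1) * M + 1, by omega, by omega⟩
  have hMC : M ≤ C := le_trans (Nat.le_add_right _ _) hC
  refine ⟨D4.Wf R V (D4.sub φ) N C, D4.Rf R V (D4.sub φ) N C, D4.Vf R V (D4.sub φ) N C,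
    inferInstance, ?_, ?_, ?_⟩
  · intro a
    obtain ⟨p, rfl⟩ := D4.mk_surj a
    obtain ⟨v, hv⟩ := hser p.1.1
    obtain ⟨f, -, hf⟩ := D4.forward hR hM p {v} (by simpa using hv)
      (le_trans (by simp; nlinarith [Nat.zero_le (N * M)]) hC)
    exact ⟨f v, (hf v (by simp)).1⟩
  · intro a b c hab hbc
    obtain ⟨p, rfl⟩ := D4.mk_surj a
    obtain ⟨q, rfl⟩ := D4.mk_surj b
    obtain ⟨r, rfl⟩ := D4.mk_surj c
    exact D4.Rf_mk.2 ((D4.Rf_mk.1 hab).trans (D4.Rf_mk.1 hbc))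
  · obtain ⟨δ, -, h2⟩ := D4.extend_col (γ := fun _ : W => (⟨0, hC1⟩ : Fin C)) (A := ∅)
      (by simp) Set.finite_empty (hM w).1 (by simpa using (hM w).2.trans hMC)
    exact ⟨D4.mk R V (D4.sub φ) N C ⟨(w, δ), by simpa using h2⟩,
      (D4.truth hR hM hC φ le_rfl hN.ge _).2 hw⟩
end

section
/- The logic S4(⋄≥, ⟟) has the local finite model property: if a formula φ of the modal language (⋄≥, ⟟) is satisfied at some world of some Kripke structure whose accessibility relation is reflexive and transitive, then φ is satisfied at some world of some Kripke structure with a finite universe whose accessibility relation is reflexive and transitive. -/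
universe v


section Filtration

open Classical

structure ClosedSet (cl : Finset MF) : Prop where
  neg : ∀ ψ, MF.neg ψ ∈ cl → ψ ∈ cl
  and : ∀ ψ χ, MF.and ψ χ ∈ cl → ψ ∈ cl ∧ χ ∈ cl
  dia : ∀ n ψ, MF.dia n ψ ∈ cl → ψ ∈ cl
  conv : ∀ ψ, MF.conv ψ ∈ cl → ψ ∈ cl

theorem exists_closure (φ : MF) : ∃ cl : Finset MF, φ ∈ cl ∧ ClosedSet cl := by
  induction φ with
  | var p => exact ⟨{.var p}, by simp, ⟨by simp, by simp, by simp, by simp⟩⟩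
  | neg ψ ih =>
    obtain ⟨cl, h, hc⟩ := ih
    refine ⟨insert (.neg ψ) cl, by simp, ⟨?_, ?_, ?_, ?_⟩⟩
    · intro χ hχ; simp at hχ ⊢; rcases hχ with rfl | hχ
      · exact Or.inr h
      · exact Or.inr (hc.neg _ hχ)
    · intro χ θ hχ; simp at hχ ⊢; have := hc.and _ _ hχ; tauto
    · intro n χ hχ; simp at hχ ⊢; have := hc.dia _ _ hχ; tauto
    · intro χ hχ; simp at hχ ⊢; have := hc.conv _ hχ; tauto
  | and ψ ψ' ih ih' =>
    obtain ⟨cl, h, hc⟩ := ih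
    obtain ⟨cl', h', hc'⟩ := ih'
    refine ⟨insert (.and ψ ψ') (cl ∪ cl'), by simp, ⟨?_, ?_, ?_, ?_⟩⟩
    · intro χ hχ; simp at hχ ⊢
      have := hc.neg χ; have := hc'.neg χ; tauto
    · intro χ θ hχ; simp at hχ ⊢
      have := hc.and χ θ; have := hc'.and χ θ
      rcases hχ with ⟨rfl, rfl⟩ | hχ
      · exact ⟨Or.inr (Or.inl h), Or.inr (Or.inr h')⟩
      · tauto
    · intro n χ hχ; simp at hχ ⊢; have := hc.dia n χ; have := hc'.dia n χ; tauto
    · intro χ hχ; simp at hχ ⊢; have := hc.conv χ; have := hc'.conv χ; tauto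
  | dia n ψ ih =>
    obtain ⟨cl, h, hc⟩ := ih
    refine ⟨insert (.dia n ψ) cl, by simp, ⟨?_, ?_, ?_, ?_⟩⟩
    · intro χ hχ; simp at hχ ⊢; have := hc.neg _ hχ; tauto
    · intro χ θ hχ; simp at hχ ⊢; have := hc.and _ _ hχ; tauto
    · intro m χ hχ; simp at hχ ⊢; rcases hχ with ⟨rfl, rfl⟩ | hχ
      · exact Or.inr h
      · exact Or.inr (hc.dia _ _ hχ)
    · intro χ hχ; simp at hχ ⊢; have := hc.conv _ hχ; tauto
  | conv ψ ih =>
    obtain ⟨cl, h, hc⟩ := ih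
    refine ⟨insert (.conv ψ) cl, by simp, ⟨?_, ?_, ?_, ?_⟩⟩
    · intro χ hχ; simp at hχ ⊢; have := hc.neg _ hχ; tauto
    · intro χ θ hχ; simp at hχ ⊢; have := hc.and _ _ hχ; tauto
    · intro n χ hχ; simp at hχ ⊢; have := hc.dia _ _ hχ; tauto
    · intro χ hχ; simp at hχ ⊢; rcases hχ with rfl | hχ
      · exact Or.inr h
      · exact Or.inr (hc.conv _ hχ)

def MF.grade : MF → ℕ
  | .dia n _ => n
  | _ => 0

theorem exists_bound (cl : Finset MF) : ∃ N : ℕ, ∀ n ψ, MF.dia n ψ ∈ cl → n ≤ N :=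
  ⟨cl.sup MF.grade, fun _ _ h => Finset.le_sup (f := MF.grade) h⟩

variable {W : Type v}

def Big (R : W → W → Prop) (V : ℕ → Set W) (N : ℕ) (ψ : MF) (w : W) : Prop :=
  ∃ s : Finset W, N ≤ s.card ∧ ∀ v ∈ s, R w v ∧ Sat R V ψ v

noncomputable def SS (R : W → W → Prop) (V : ℕ → Set W) (N : ℕ) (ψ : MF) (w : W) :
    WithTop (Set W) :=
  if Big R V N ψ w then ⊤ else (({v | R w v ∧ Sat R V ψ v} : Set W) : WithTop (Set W))

noncomputable def mu (N : ℕ) : WithTop (Set W) → ℕ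
  | ⊤ => N
  | (s : Set W) => s.ncard

theorem not_big {R : W → W → Prop} {V : ℕ → Set W} {N : ℕ} {ψ : MF} {w : W}
    (h : ¬ Big R V N ψ w) : ({v | R w v ∧ Sat R V ψ v} : Set W).Finite ∧
      ({v | R w v ∧ Sat R V ψ v} : Set W).ncard < N := by
  have hf : ({v | R w v ∧ Sat R V ψ v} : Set W).Finite := by
    by_contra hinf
    obtain ⟨s, hs, hc⟩ := Set.Infinite.exists_subset_card_eq hinf N
    exact h ⟨s, hc.ge, fun v hv => hs hv⟩
  refine ⟨hf, ?_⟩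
  by_contra hcon
  rw [Set.ncard_eq_toFinset_card _ hf] at hcon
  exact h ⟨hf.toFinset, not_lt.1 hcon, fun v hv => by simpa using hv⟩

theorem mu_le (R : W → W → Prop) (V : ℕ → Set W) (N : ℕ) (ψ : MF) (w : W) :
    mu N (SS R V N ψ w) ≤ N := by
  unfold SS
  split_ifs with h
  · exact le_rfl
  · exact (not_big h).2.le

theorem mu_mono (R : W → W → Prop) (V : ℕ → Set W) (N : ℕ) (ψ : MF) (u w : W)
    (h : SS R V N ψ u ≤ SS R V N ψ w) : mu N (SS R V N ψ u) ≤ mu N (SS R V N ψ w) ∧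
      (mu N (SS R V N ψ u) = mu N (SS R V N ψ w) → SS R V N ψ u = SS R V N ψ w) := by
  by_cases hw : Big R V N ψ w
  · have e : SS R V N ψ w = ⊤ := by simp [SS, hw]
    refine ⟨by rw [e]; exact mu_le _ _ _ _ _, ?_⟩
    intro h2
    by_cases hu : Big R V N ψ u
    · simp [SS, hw, hu]
    · rw [e] at h2
      have := (not_big hu).2
      simp only [SS, hu, if_false] at h2
      change Set.ncard _ = N at h2
      omega
  · by_cases hu : Big R V N ψ u
    · simp [SS, hw, hu] at h
    · simp only [SS, hw, hu, if_false] at h ⊢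
      rw [WithTop.coe_le_coe] at h
      change Set.ncard _ ≤ Set.ncard _ ∧ (Set.ncard _ = Set.ncard _ → _)
      refine ⟨Set.ncard_le_ncard h (not_big hw).1, fun h2 => ?_⟩
      rw [Set.eq_of_subset_of_ncard_le h h2.ge (not_big hw).1]

theorem SS_anti {R : W → W → Prop} (V : ℕ → Set W) (htr : ∀ x y z : W, R x y → R y z → R x z)
    (N : ℕ) (ψ : MF) {u w : W} (h : R u w) : SS R V N ψ w ≤ SS R V N ψ u := by
  by_cases hu : Big R V N ψ u
  · simp [SS, hu]
  · have hw : ¬ Big R V N ψ w := by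
      rintro ⟨s, hs, hv⟩
      exact hu ⟨s, hs, fun v hv' => ⟨htr _ _ _ h (hv v hv').1, (hv v hv').2⟩⟩
    simp only [SS, hw, hu, if_false]
    rw [WithTop.coe_le_coe]
    rintro v ⟨h1, h2⟩
    exact ⟨htr _ _ _ h h1, h2⟩

theorem filtration (R : W → W → Prop) (V : ℕ → Set W) (hrefl : ∀ x, R x x)
    (htr : ∀ x y z : W, R x y → R y z → R x z) (cl : Finset MF) (hcl : ClosedSet cl)
    (N : ℕ) (hN : ∀ n ψ, MF.dia n ψ ∈ cl → n ≤ N) :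
    ∃ (D : Type v) (_ : PartialOrder D) (data : W → D) (rk : D → ℕ) (B : ℕ),
      (∀ d, rk d ≤ B) ∧ (∀ d d', d < d' → rk d' < rk d) ∧
      ∀ χ ∈ cl, ∀ w, Sat (fun u v => data u ≤ data v) V χ w ↔ Sat R V χ w := by
  let D0 := (↥cl → (WithTop (Set W))ᵒᵈ) × (↥cl → Prop)
  let P : W → ↥cl → Prop := fun w ψ => ∃ u, R u w ∧ Sat R V ψ.1 u
  let dat : W → D0 := fun w => (fun ψ => OrderDual.toDual (SS R V N ψ.1 w), P w)
  let rk0 : D0 → ℕ := fun d => ∑ ψ, mu N (OrderDual.ofDual (d.1 ψ)) +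
    ∑ ψ, (if d.2 ψ then 0 else 1)
  have hle : ∀ u w, dat u ≤ dat w ↔ (∀ ψ : ↥cl, SS R V N ψ.1 w ≤ SS R V N ψ.1 u) ∧
      ∀ ψ, P u ψ → P w ψ := by
    intro u w
    rw [Prod.le_def, Pi.le_def, Pi.le_def]
    rfl
  refine ⟨Set.range dat, inferInstance, fun w => ⟨dat w, w, rfl⟩, fun d => rk0 d.1,
    ∑ ψ : ↥cl, N + ∑ ψ : ↥cl, 1, ?_, ?_, ?_⟩
  · rintro ⟨_, w, rfl⟩
    refine Nat.add_le_add (Finset.sum_le_sum fun ψ _ => mu_le _ _ _ _ _)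
      (Finset.sum_le_sum fun ψ _ => ?_)
    split_ifs <;> omega
  · rintro ⟨_, u, rfl⟩ ⟨_, w, rfl⟩ h
    have h1 : dat u ≤ dat w := le_of_lt h
    have hne : dat u ≠ dat w := fun e => h.ne (Subtype.ext e)
    obtain ⟨ha, hb⟩ := (hle u w).1 h1
    have hb' : ∀ ψ, (if P w ψ then 0 else 1) ≤ (if P u ψ then 0 else 1) := by
      intro ψ
      have := hb ψ
      by_cases h1 : P u ψ <;> by_cases h2 : P w ψ <;> simp_all
    have sa : ∑ ψ : ↥cl, mu N (SS R V N ψ.1 w) ≤ ∑ ψ : ↥cl, mu N (SS R V N ψ.1 u) :=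
      Finset.sum_le_sum fun ψ _ => (mu_mono _ _ _ _ _ _ (ha ψ)).1
    have sb : ∑ ψ : ↥cl, (if P w ψ then 0 else 1) ≤ ∑ ψ : ↥cl, (if P u ψ then 0 else 1) :=
      Finset.sum_le_sum fun ψ _ => hb' ψ
    change ∑ ψ : ↥cl, mu N (SS R V N ψ.1 w) + ∑ ψ : ↥cl, (if P w ψ then 0 else 1) <
      ∑ ψ : ↥cl, mu N (SS R V N ψ.1 u) + ∑ ψ : ↥cl, (if P u ψ then 0 else 1)
    by_contra hcon
    apply hne
    have ea : ∑ ψ : ↥cl, mu N (SS R V N ψ.1 w) = ∑ ψ : ↥cl, mu N (SS R V N ψ.1 u) := by omega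
    have eb : ∑ ψ : ↥cl, (if P w ψ then 0 else 1) = ∑ ψ : ↥cl, (if P u ψ then 0 else 1) := by
      omega
    rw [Finset.sum_eq_sum_iff_of_le fun ψ _ => (mu_mono _ _ _ _ _ _ (ha ψ)).1] at ea
    rw [Finset.sum_eq_sum_iff_of_le fun ψ _ => hb' ψ] at eb
    refine Prod.ext ?_ ?_
    · funext ψ
      exact congrArg OrderDual.toDual ((mu_mono _ _ _ _ _ _ (ha ψ)).2 (ea ψ (Finset.mem_univ _))).symm
    · funext ψ
      have := eb ψ (Finset.mem_univ _)
      show P u ψ = P w ψ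
      by_cases h1 : P u ψ <;> by_cases h2 : P w ψ <;> simp_all
  · have hRR : ∀ u w, R u w → dat u ≤ dat w := by
      intro u w h
      rw [hle]
      refine ⟨fun ψ => SS_anti V htr N ψ.1 h, ?_⟩
      rintro ψ ⟨x, hx, hs⟩
      exact ⟨x, htr _ _ _ hx h, hs⟩
    intro χ hχ
    induction χ with
    | var p => intro w; exact Iff.rfl
    | neg ψ ih => intro w; exact not_congr (ih (hcl.neg _ hχ) w)
    | and ψ θ ih1 ih2 =>
      intro w
      exact and_congr (ih1 (hcl.and _ _ hχ).1 w) (ih2 (hcl.and _ _ hχ).2 w)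
    | dia n ψ ih =>
      intro w
      have hψ := hcl.dia _ _ hχ
      constructor
      · rintro ⟨s, hs, hv⟩
        by_cases hb : Big R V N ψ w
        · obtain ⟨s', hs', hv'⟩ := hb
          exact ⟨s', (hN n ψ hχ).trans hs', hv'⟩
        · refine ⟨s, hs, fun v hvs => ?_⟩
          obtain ⟨h1, h2⟩ := hv v hvs
          rw [ih hψ] at h2
          have h3 := ((hle w v).1 h1).1 ⟨ψ, hψ⟩
          by_cases hbv : Big R V N ψ v
          · simp [SS, hb, hbv] at h3
          · simp only [SS, hb, hbv, if_false] at h3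
            rw [WithTop.coe_le_coe] at h3
            exact h3 (show R v v ∧ _ from ⟨hrefl v, h2⟩)
      · rintro ⟨s, hs, hv⟩
        exact ⟨s, hs, fun v hvs => ⟨hRR _ _ (hv v hvs).1, (ih hψ v).2 (hv v hvs).2⟩⟩
    | conv ψ ih =>
      intro w
      have hψ := hcl.conv _ hχ
      constructor
      · rintro ⟨v, h1, h2⟩
        rw [ih hψ] at h2
        exact ((hle v w).1 h1).2 ⟨ψ, hψ⟩ ⟨v, hrefl v, h2⟩
      · rintro ⟨v, h1, h2⟩
        exact ⟨v, hRR _ _ h1, (ih hψ v).2 h2⟩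

end Filtration

section Combinatorics

open Classical

/-- `g` is a label-preserving, monotone, injective map on the up-closed finite set `Y`. -/
structure Leg {Ω : Type} {D : Type v} [PartialOrder D] {L : Type} (up : Ω → Finset Ω)
    (lab : Ω → L) (lam : D → L) (Y : Finset Ω) (g : Ω → D) : Prop where
  closed : ∀ x ∈ Y, up x ⊆ Y
  inj : Set.InjOn g (Y : Set Ω)
  mono : ∀ x ∈ Y, ∀ y ∈ up x, g x ≤ g y
  lab : ∀ x ∈ Y, lab x = lam (g x)

structure Stage {Ω : Type} {D : Type v} [PartialOrder D] {L : Type} (up : Ω → Finset Ω)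
    (lab : Ω → L) (lam : D → L) (rk : L → ℕ) (Good : D → Finset D → Prop)
    (f : ℕ → ℕ) (K r : ℕ) : Prop where
  refl : ∀ a, a ∈ up a
  trans : ∀ a, ∀ b ∈ up a, up b ⊆ up a
  legal : ∀ a, ∃ g : Ω → D, Leg up lab lam (up a) g ∧ Good (g a) ((up a).image g)
  cardb : ∀ a, (up a).card ≤ f (rk (lab a))
  rkb : ∀ a, rk (lab a) < r
  ext : ∀ (Y : Finset Ω) (g : Ω → D) (C : D), Leg up lab lam Y g → rk (lam C) < r →
    (∀ y ∈ Y, C < g y) → Y.card + 1 ≤ f (rk (lam C)) → Good C (insert C (Y.image g)) →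
    ∀ T : Finset Ω, T.card < K → ∃ a, a ∉ T ∧ lab a = lam C ∧ up a = insert a Y

theorem stage_exists {D : Type v} [PartialOrder D] {L : Type} [Finite L]
    (lam : D → L) (rk : L → ℕ)
    (hrk : ∀ d d' : D, d < d' → rk (lam d') < rk (lam d)) (Good : D → Finset D → Prop)
    (f : ℕ → ℕ) (K r : ℕ) :
    ∃ (Ω : Type) (_ : Finite Ω) (up : Ω → Finset Ω) (lab : Ω → L),
      Stage up lab lam rk Good f K r := by
  induction r with
  | zero =>
    refine ⟨Empty, inferInstance, fun a => a.elim, fun a => a.elim, ?_⟩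
    constructor
    · exact fun a => a.elim
    · exact fun a => a.elim
    · exact fun a => a.elim
    · exact fun a => a.elim
    · exact fun a => a.elim
    · intro Y g C _ h; exact absurd h (Nat.not_lt_zero _)
  | succ r ih =>
    obtain ⟨Ω, hfin, up, lab, S⟩ := ih
    let New := {p : L × Finset Ω // ∃ (g : Ω → D) (C : D), Leg up lab lam p.2 g ∧
      rk (lam C) = r ∧ (∀ y ∈ p.2, C < g y) ∧ p.2.card + 1 ≤ f (rk (lam C)) ∧
      Good C (insert C (p.2.image g)) ∧ lam C = p.1}
    let up' : Ω ⊕ (Fin K × New) → Finset (Ω ⊕ (Fin K × New)) := fun x => match x with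
      | .inl x => (up x).map ⟨Sum.inl, Sum.inl_injective⟩
      | .inr p => insert (.inr p) (p.2.1.2.map ⟨Sum.inl, Sum.inl_injective⟩)
    let lab' : Ω ⊕ (Fin K × New) → L := fun x => match x with
      | .inl x => lab x
      | .inr p => p.2.1.1
    have mem_inl : ∀ (x y : Ω), Sum.inl y ∈ up' (.inl x) ↔ y ∈ up x := by
      intro x y; simp [up']
    have inr_inl : ∀ (x : Ω) y, Sum.inr y ∉ up' (.inl x) := by
      intro x y; simp [up']
    have mem_inr : ∀ (p : Fin K × New) (y : Ω), Sum.inl y ∈ up' (.inr p) ↔ y ∈ p.2.1.2 := by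
      intro x y; simp [up']
    have inr_inr : ∀ (p : Fin K × New) q, Sum.inr q ∈ up' (.inr p) ↔ q = p := by
      intro x y; simp [up']
    refine ⟨Ω ⊕ (Fin K × New), inferInstance, up', lab', ?_⟩
    constructor
    · rintro (a | a)
      · rw [mem_inl]; exact S.refl a
      · rw [inr_inr]
    · rintro (a | a) (b | b) hb (c | c) hc
      · rw [mem_inl] at *; exact S.trans a b hb hc
      · exact absurd hc (inr_inl _ _)
      · exact absurd hb (inr_inl _ _)
      · exact absurd hb (inr_inl _ _)
      · rw [mem_inr] at hb ⊢; rw [mem_inl] at hc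
        obtain ⟨g, C, hl, -⟩ := a.2.2
        exact hl.closed b hb hc
      · exact absurd hc (inr_inl _ _)
      · rw [inr_inr] at hb; subst hb; exact hc
      · rw [inr_inr] at hb; subst hb; exact hc
    · rintro (a | a)
      · obtain ⟨g, hl, hg⟩ := S.legal a
        refine ⟨Sum.elim g (fun _ => g a), ⟨?_, ?_, ?_, ?_⟩, ?_⟩
        · rintro (x | x) hx (y | y) hy
          · rw [mem_inl] at *; exact S.trans a x hx hy
          · exact absurd hy (inr_inl _ _)
          · exact absurd hx (inr_inl _ _)
          · exact absurd hx (inr_inl _ _)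
        · rintro (x | x) hx (y | y) hy h
          · rw [Finset.mem_coe, mem_inl] at *; exact congrArg _ (hl.inj hx hy h)
          · exact absurd hy (inr_inl _ _)
          · exact absurd hx (inr_inl _ _)
          · exact absurd hx (inr_inl _ _)
        · rintro (x | x) hx (y | y) hy
          · rw [mem_inl] at *; exact hl.mono x hx y hy
          · exact absurd hy (inr_inl _ _)
          · exact absurd hx (inr_inl _ _)
          · exact absurd hx (inr_inl _ _)
        · rintro (x | x) hx
          · rw [mem_inl] at *; exact hl.lab x hx
          · exact absurd hx (inr_inl _ _)
        · have : (up' (Sum.inl a)).image (Sum.elim g (fun _ => g a)) = (up a).image g := by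
            ext d; simp [up']
          rw [this]; exact hg
      · obtain ⟨g, C, hl, hr, hlt, hcard, hgood, hlam⟩ := a.2.2
        refine ⟨Sum.elim g (fun _ => C), ⟨?_, ?_, ?_, ?_⟩, ?_⟩
        · rintro (x | x) hx (y | y) hy
          · rw [mem_inr] at *; rw [mem_inl] at hy; exact hl.closed x hx hy
          · exact absurd hy (inr_inl _ _)
          · rw [inr_inr] at hx; subst hx; exact hy
          · rw [inr_inr] at hx; subst hx; exact hy
        · rintro (x | x) hx (y | y) hy h
          · rw [Finset.mem_coe, mem_inr] at *; exact congrArg _ (hl.inj hx hy h)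
          · rw [Finset.mem_coe, mem_inr] at hx
            exact absurd h (hlt x hx).ne'
          · rw [Finset.mem_coe, mem_inr] at hy
            exact absurd h (hlt y hy).ne
          · rw [Finset.mem_coe, inr_inr] at *; rw [hx, hy]
        · rintro (x | x) hx (y | y) hy
          · rw [mem_inr] at *; rw [mem_inl] at hy; exact hl.mono x hx y hy
          · exact absurd hy (inr_inl _ _)
          · rw [inr_inr] at hx; subst hx; rw [mem_inr] at hy; exact (hlt y hy).le
          · exact le_rfl
        · rintro (x | x) hx
          · rw [mem_inr] at *; exact hl.lab x hx
          · rw [inr_inr] at hx; subst hx; exact hlam.symm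
        · have : (up' (Sum.inr a)).image (Sum.elim g (fun _ => C))
              = insert C (a.2.1.2.image g) := by
            ext d; simp [up']
          rw [this]; exact hgood
    · rintro (a | a)
      · simpa [up', lab'] using S.cardb a
      · obtain ⟨g, C, hl, hr, hlt, hcard, hgood, hlam⟩ := a.2.2
        have h1 : (up' (.inr a)).card ≤ a.2.1.2.card + 1 := by
          refine (Finset.card_insert_le _ _).trans ?_
          simp
        rw [hlam] at hcard
        exact h1.trans hcard
    · rintro (a | a)
      · exact (S.rkb a).trans (Nat.lt_succ_self r)
      · obtain ⟨g, C, hl, hr, hlt, hcard, hgood, hlam⟩ := a.2.2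
        show rk a.2.1.1 < r + 1
        rw [← hlam, hr]; exact Nat.lt_succ_self r
    · intro Y g C hl hC hlt hcard hgood T hT
      have hYr : ∀ p, Sum.inr p ∉ Y := by
        intro p hp
        have h1 := hrk _ _ (hlt _ hp)
        rw [← hl.lab _ hp] at h1
        obtain ⟨g', C', -, hr, -, -, -, hlam⟩ := p.2.2
        have h2 : rk (lab' (.inr p)) = r := by
          show rk p.2.1.1 = r
          rw [← hlam, hr]
        omega
      let Y0 : Finset Ω := Y.preimage Sum.inl (Sum.inl_injective.injOn)
      have hY0 : ∀ y, y ∈ Y0 ↔ Sum.inl y ∈ Y := by intro y; simp [Y0]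
      have hYmap : Y = Y0.map ⟨Sum.inl, Sum.inl_injective⟩ := by
        ext (y | y)
        · simp [hY0]
        · simp [hYr]
      have hc : Y0.card = Y.card := by rw [hYmap]; simp
      have hl0 : Leg up lab lam Y0 (g ∘ Sum.inl) := by
        refine ⟨?_, ?_, ?_, ?_⟩
        · intro x hx y hy
          rw [hY0] at *
          exact hl.closed _ hx ((mem_inl _ _).2 hy)
        · intro x hx y hy h
          rw [Finset.mem_coe, hY0] at *
          exact Sum.inl_injective (hl.inj hx hy h)
        · intro x hx y hy
          exact hl.mono _ ((hY0 _).1 hx) _ ((mem_inl _ _).2 hy)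
        · intro x hx
          exact hl.lab _ ((hY0 _).1 hx)
      have hlt0 : ∀ y ∈ Y0, C < (g ∘ Sum.inl) y := fun y hy => hlt _ ((hY0 _).1 hy)
      have himg : Y0.image (g ∘ Sum.inl) = Y.image g := by
        rw [hYmap]; ext d; simp
      rw [← hc] at hcard
      rw [← himg] at hgood
      rcases Nat.lt_succ_iff_lt_or_eq.1 hC with hC | hC
      · obtain ⟨a, ha, hla, hua⟩ := S.ext Y0 (g ∘ Sum.inl) C hl0 hC hlt0 hcard hgood
          (T.preimage Sum.inl (Sum.inl_injective.injOn)) (by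
            refine lt_of_le_of_lt ?_ hT
            exact Finset.card_le_card_of_injOn Sum.inl (by intro x hx; simpa using hx)
              Sum.inl_injective.injOn)
        refine ⟨.inl a, by simpa using ha, hla, ?_⟩
        show (up a).map _ = _
        rw [hua, hYmap]; ext x; simp [eq_comm]
      · let q : New := ⟨(lam C, Y0), g ∘ Sum.inl, C, hl0, hC, hlt0, hcard, hgood, rfl⟩
        have : ∃ i : Fin K, (Sum.inr (i, q) : Ω ⊕ (Fin K × New)) ∉ T := by
          by_contra hcon
          push Not at hcon
          have := Finset.card_le_card_of_injOn (s := (Finset.univ : Finset (Fin K))) (t := T)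
            (fun i => (Sum.inr (i, q) : Ω ⊕ (Fin K × New))) (fun i _ => hcon i)
            (by intro i _ j _ h; simpa using h)
          simp at this
          omega
        obtain ⟨i, hi⟩ := this
        refine ⟨.inr (i, q), hi, rfl, ?_⟩
        show insert _ (Y0.map _) = _
        rw [hYmap]; ext x; simp

theorem Leg.subset {Ω : Type} {D : Type v} [PartialOrder D] {L : Type} {up : Ω → Finset Ω}
    {lab : Ω → L} {lam : D → L} {Y Y' : Finset Ω} {g : Ω → D} (h : Leg up lab lam Y g)
    (hs : Y' ⊆ Y) (hc : ∀ x ∈ Y', up x ⊆ Y') : Leg up lab lam Y' g :=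
  ⟨hc, h.inj.mono (by exact_mod_cast hs), fun x hx => h.mono x (hs hx),
    fun x hx => h.lab x (hs hx)⟩

theorem extend {Ω : Type} {D : Type v} [PartialOrder D] {L : Type} {up : Ω → Finset Ω}
    {lab : Ω → L} {lam : D → L} {rk : L → ℕ} {Good : D → Finset D → Prop} {K r b : ℕ}
    (hrk : ∀ d d' : D, d < d' → rk (lam d') < rk (lam d)) (hr : ∀ d, rk (lam d) < r)
    (mono : ∀ C X X', X ⊆ X' → Good C X → Good C X')
    (S : Stage up lab lam rk Good (fun k => (b + 2) ^ k) K r)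
    (Z0 A : Finset Ω) (h0 : Ω → D) (hl0 : Leg up lab lam Z0 h0) (hA : A ⊆ Z0)
    (hA1 : A.card ≤ 1)
    (G : Finset D) (hG : ∀ v ∈ G, Good v (G.filter (v ≤ ·))) (hGb : G.card ≤ b)
    (hK : Z0.card + G.card ≤ K) :
    ∃ (Z : Finset Ω) (h : Ω → D), Leg up lab lam Z h ∧ Z0 ⊆ Z ∧ (∀ x ∈ Z0, h x = h0 x) ∧
      Z.card ≤ Z0.card + G.card ∧ (∀ v ∈ G, ∃ z ∈ Z, h z = v) ∧
      ∀ z ∈ Z, z ∉ Z0 → ∀ a ∈ A, h z < h0 a → a ∈ up z := by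
  induction G using Finset.induction_on_max_value (fun d => rk (lam d)) with
  | empty => exact ⟨Z0, h0, hl0, subset_rfl, fun _ _ => rfl, by simp, by simp,
      fun z hz hz' => absurd hz hz'⟩
  | insert v s hvs hmax ih =>
    rw [Finset.card_insert_of_notMem hvs] at hGb hK
    have hs : ∀ u ∈ s, Good u (s.filter (u ≤ ·)) := by
      intro u hu
      refine mono _ _ _ ?_ (hG u (Finset.mem_insert_of_mem hu))
      intro x hx
      rw [Finset.mem_filter, Finset.mem_insert] at hx
      rw [Finset.mem_filter]
      rcases hx with ⟨rfl | hx, hux⟩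
      · have hne : u ≠ x := by rintro rfl; exact hvs hu
        have := hrk _ _ (lt_of_le_of_ne hux hne)
        have := hmax u hu
        omega
      · exact ⟨hx, hux⟩
    obtain ⟨Z, h, hl, hZ, hag, hcard, hcov, hedge⟩ := ih hs (by omega) (by omega)
    by_cases hv : ∃ z ∈ Z, h z = v
    · refine ⟨Z, h, hl, hZ, hag, ?_, ?_, hedge⟩
      · rw [Finset.card_insert_of_notMem hvs]; omega
      · intro u hu
        rcases Finset.mem_insert.1 hu with rfl | hu
        · exact hv
        · exact hcov u hu
    · push Not at hv
      let sel := Z.filter (fun x => v < h x ∧ (h x ∈ s ∨ x ∈ A))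
      have hselZ : sel ⊆ Z := Finset.filter_subset _ _
      let Y := sel.biUnion up
      have hYZ : Y ⊆ Z := by
        intro y hy
        obtain ⟨x, hx, hy⟩ := Finset.mem_biUnion.1 hy
        exact hl.closed x (hselZ hx) hy
      have hYc : ∀ x ∈ Y, up x ⊆ Y := by
        intro y hy z hz
        obtain ⟨x, hx, hy⟩ := Finset.mem_biUnion.1 hy
        exact Finset.mem_biUnion.2 ⟨x, hx, S.trans x y hy hz⟩
      have hvY : ∀ y ∈ Y, v < h y := by
        intro y hy
        obtain ⟨x, hx, hy⟩ := Finset.mem_biUnion.1 hy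
        exact lt_of_lt_of_le (Finset.mem_filter.1 hx).2.1 (hl.mono x (hselZ hx) y hy)
      have hselcard : sel.card ≤ b + 1 := by
        have h1 : sel ⊆ (Z.filter (fun x => h x ∈ s)) ∪ A := by
          intro x hx
          have := Finset.mem_filter.1 hx
          rw [Finset.mem_union, Finset.mem_filter]
          tauto
        have h2 : (Z.filter (fun x => h x ∈ s)).card ≤ s.card := by
          refine Finset.card_le_card_of_injOn h ?_ ?_
          · intro x hx; exact (Finset.mem_filter.1 hx).2
          · exact hl.inj.mono (by intro x hx; exact (Finset.mem_filter.1 hx).1)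
        have h3 := Finset.card_le_card h1
        have h4 := Finset.card_union_le (Z.filter (fun x => h x ∈ s)) A
        omega
      have hYcard : Y.card + 1 ≤ (b + 2) ^ (rk (lam v)) := by
        rcases Nat.eq_zero_or_pos (rk (lam v)) with h00 | hpos
        · have : Y = ∅ := by
            rw [Finset.eq_empty_iff_forall_notMem]
            intro y hy
            have := hrk _ _ (hvY y hy)
            omega
          rw [this]; simp [h00]
        · obtain ⟨k, hk⟩ := Nat.exists_eq_succ_of_ne_zero hpos.ne'
          have h1 : Y.card ≤ sel.card * (b + 2) ^ k := by
            refine Finset.card_biUnion_le_card_mul _ _ _ ?_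
            intro x hx
            refine (S.cardb x).trans ?_
            refine Nat.pow_le_pow_right (by omega) ?_
            rw [hl.lab x (hselZ hx)]
            have := hrk _ _ (Finset.mem_filter.1 hx).2.1
            omega
          have h2 : sel.card * (b + 2) ^ k ≤ (b + 1) * (b + 2) ^ k := Nat.mul_le_mul_right _ hselcard
          have h3 : 1 ≤ (b + 2) ^ k := Nat.one_le_pow _ _ (by omega)
          rw [hk, pow_succ]
          nlinarith
      have hgood : Good v (insert v (Y.image h)) := by
        refine mono _ _ _ ?_ (hG v (Finset.mem_insert_self _ _))
        intro x hx
        rw [Finset.mem_filter, Finset.mem_insert] at hx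
        rcases hx with ⟨rfl | hx, hvx⟩
        · exact Finset.mem_insert_self _ _
        · have hne : v ≠ x := by rintro rfl; exact hvs hx
          obtain ⟨z, hz, rfl⟩ := hcov x hx
          refine Finset.mem_insert_of_mem (Finset.mem_image_of_mem _ ?_)
          exact Finset.mem_biUnion.2 ⟨z, Finset.mem_filter.2
            ⟨hz, lt_of_le_of_ne hvx hne, Or.inl hx⟩, S.refl z⟩
      obtain ⟨c, hcZ, hlc, huc⟩ := S.ext Y h v (hl.subset hYZ hYc) (hr v) hvY hYcard hgood Z
        (by omega)
      have hne : ∀ x ∈ Z, x ≠ c := by rintro x hx rfl; exact hcZ hx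
      have hup : ∀ x ∈ Z, Function.update h c v x = h x := fun x hx =>
        Function.update_of_ne (hne x hx) _ _
      refine ⟨insert c Z, Function.update h c v, ⟨?_, ?_, ?_, ?_⟩, ?_, ?_, ?_, ?_, ?_⟩
      · intro x hx
        rcases Finset.mem_insert.1 hx with rfl | hx
        · rw [huc]; exact Finset.insert_subset_insert _ hYZ
        · exact (hl.closed x hx).trans (Finset.subset_insert _ _)
      · intro x hx y hy hxy
        rw [Finset.mem_coe] at hx hy
        rcases Finset.mem_insert.1 hx with hx' | hx' <;>
          rcases Finset.mem_insert.1 hy with hy' | hy'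
        · rw [hx', hy']
        · rw [hup y hy', hx', Function.update_self] at hxy
          exact absurd hxy.symm (hv y hy')
        · rw [hup x hx', hy', Function.update_self] at hxy
          exact absurd hxy (hv x hx')
        · rw [hup x hx', hup y hy'] at hxy
          exact hl.inj hx' hy' hxy
      · intro x hx y hy
        rcases Finset.mem_insert.1 hx with rfl | hx
        · rw [huc] at hy
          rcases Finset.mem_insert.1 hy with rfl | hy
          · exact le_rfl
          · rw [hup y (hYZ hy), Function.update_self]; exact (hvY y hy).le
        · rw [hup x hx, hup y (hl.closed x hx hy)]; exact hl.mono x hx y hy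
      · intro x hx
        rcases Finset.mem_insert.1 hx with rfl | hx
        · rw [Function.update_self]; exact hlc
        · rw [hup x hx]; exact hl.lab x hx
      · exact hZ.trans (Finset.subset_insert _ _)
      · intro x hx; rw [hup x (hZ hx)]; exact hag x hx
      · rw [Finset.card_insert_of_notMem hvs, Finset.card_insert_of_notMem hcZ]; omega
      · intro u hu
        rcases Finset.mem_insert.1 hu with rfl | hu
        · exact ⟨c, Finset.mem_insert_self _ _, Function.update_self _ _ _⟩
        · obtain ⟨z, hz, hzu⟩ := hcov u hu
          exact ⟨z, Finset.mem_insert_of_mem hz, by rw [hup z hz, hzu]⟩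
      · intro z hz hz0 a ha hza
        rcases Finset.mem_insert.1 hz with rfl | hz
        · rw [Function.update_self] at hza
          rw [huc]
          refine Finset.mem_insert_of_mem (Finset.mem_biUnion.2 ⟨a, Finset.mem_filter.2
            ⟨hZ (hA ha), ?_, Or.inr ha⟩, S.refl a⟩)
          rw [hag a (hA ha)]; exact hza
        · rw [hup z hz] at hza
          exact hedge z hz hz0 a ha hza

/-- Bounded-size forward closed sets. -/
theorem closed_sets {D : Type v} [PartialOrder D] (rk : D → ℕ)
    (hrk : ∀ d d' : D, d < d' → rk d' < rk d) (Good : D → Finset D → Prop)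
    (mono : ∀ C X X', X ⊆ X' → Good C X → Good C X') (b0 : ℕ)
    (wit : ∀ C, ∃ X : Finset D, X.card ≤ b0 ∧ (∀ x ∈ X, C ≤ x) ∧ Good C X) (r : ℕ) :
    ∃ b : ℕ, ∀ C, rk C < r → ∃ G : Finset D, C ∈ G ∧ G.card ≤ b ∧ (∀ v ∈ G, C ≤ v) ∧
      ∀ v ∈ G, Good v (G.filter (v ≤ ·)) := by
  induction r with
  | zero => exact ⟨0, fun C h => absurd h (Nat.not_lt_zero _)⟩
  | succ r ih =>
    obtain ⟨b, ih⟩ := ih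
    refine ⟨b0 * b + 1, fun C hC => ?_⟩
    obtain ⟨X, hXc, hXC, hX⟩ := wit C
    have : ∀ x : D, ∃ G : Finset D, G.card ≤ b ∧ (C < x → x ∈ G ∧ (∀ v ∈ G, x ≤ v) ∧
      ∀ v ∈ G, Good v (G.filter (v ≤ ·))) := by
      intro x
      by_cases hx : C < x
      · obtain ⟨G, h1, h2, h3, h4⟩ := ih x (by have := hrk _ _ hx; omega)
        exact ⟨G, h2, fun _ => ⟨h1, h3, h4⟩⟩
      · exact ⟨∅, by simp, fun h => absurd h hx⟩
    choose F hFb hF using this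
    let X' := X.filter (C < ·)
    have hX' : ∀ x ∈ X', C < x := fun x hx => (Finset.mem_filter.1 hx).2
    refine ⟨insert C (X'.biUnion F), Finset.mem_insert_self _ _, ?_, ?_, ?_⟩
    · refine (Finset.card_insert_le _ _).trans ?_
      have h1 : (X'.biUnion F).card ≤ X'.card * b :=
        Finset.card_biUnion_le_card_mul _ _ _ (fun x _ => hFb x)
      have h2 : X'.card ≤ b0 := (Finset.card_le_card (Finset.filter_subset _ _)).trans hXc
      have := Nat.mul_le_mul_right b h2
      omega
    · intro v hv
      rcases Finset.mem_insert.1 hv with rfl | hv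
      · exact le_rfl
      · obtain ⟨x, hx, hv⟩ := Finset.mem_biUnion.1 hv
        exact (hX' x hx).le.trans ((hF x (hX' x hx)).2.1 v hv)
    · intro v hv
      rcases Finset.mem_insert.1 hv with rfl | hv
      · refine mono _ _ _ ?_ hX
        intro x hx
        rw [Finset.mem_filter]
        refine ⟨?_, hXC x hx⟩
        rcases (hXC x hx).eq_or_lt with rfl | hlt
        · exact Finset.mem_insert_self _ _
        · exact Finset.mem_insert_of_mem (Finset.mem_biUnion.2
            ⟨x, Finset.mem_filter.2 ⟨hx, hlt⟩, (hF x hlt).1⟩)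
      · obtain ⟨x, hx, hv⟩ := Finset.mem_biUnion.1 hv
        refine mono _ _ _ ?_ ((hF x (hX' x hx)).2.2 v hv)
        refine Finset.filter_subset_filter _ ?_
        intro y hy
        exact Finset.mem_insert_of_mem (Finset.mem_biUnion.2 ⟨x, hx, hy⟩)

theorem finite_poset {D : Type v} [PartialOrder D] {L : Type} [Finite L]
    (lam : D → L) (rk : L → ℕ) (B : ℕ) (hB : ∀ d, rk (lam d) ≤ B)
    (hrk : ∀ d d' : D, d < d' → rk (lam d') < rk (lam d)) (Good : D → Finset D → Prop)
    (mono : ∀ C X X', X ⊆ X' → Good C X → Good C X') (b0 : ℕ)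
    (wit : ∀ C, ∃ X : Finset D, X.card ≤ b0 ∧ (∀ x ∈ X, C ≤ x) ∧ Good C X) :
    ∃ (Ω : Type) (_ : Finite Ω) (up : Ω → Finset Ω) (lab : Ω → L),
      (∀ a, a ∈ up a) ∧ (∀ a, ∀ b ∈ up a, up b ⊆ up a) ∧
      (∀ a, ∃ g : Ω → D, Leg up lab lam (up a) g ∧ Good (g a) ((up a).image g) ∧
        ∀ u, u ≤ g a → ∃ c, a ∈ up c ∧ lab c = lam u) ∧
      ∀ d, ∃ a, lab a = lam d := by
  obtain ⟨b, hb⟩ := closed_sets (fun d => rk (lam d)) hrk Good mono b0 wit (B + 1)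
  obtain ⟨Ω, hfin, up, lab, S⟩ := stage_exists lam rk hrk Good (fun k => (b + 2) ^ k)
    ((b + 2) ^ B + b) (B + 1)
  have hr : ∀ d, rk (lam d) < B + 1 := fun d => Nat.lt_succ_of_le (hB d)
  refine ⟨Ω, hfin, up, lab, S.refl, S.trans, ?_, ?_⟩
  · intro a
    obtain ⟨g, hl, hg⟩ := S.legal a
    refine ⟨g, hl, hg, ?_⟩
    intro u hu
    rcases hu.eq_or_lt with rfl | hlt
    · exact ⟨a, S.refl a, hl.lab a (S.refl a)⟩
    · obtain ⟨G, huG, hGb, -, hG⟩ := hb u (hr u)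
      have hca : (up a).card ≤ (b + 2) ^ B := (S.cardb a).trans
        (Nat.pow_le_pow_right (by omega) (Nat.le_of_lt_succ (S.rkb a)))
      obtain ⟨Z, h, hlZ, hZ, hag, -, hcov, hedge⟩ := extend hrk hr mono S (up a) {a} g hl
        (by simpa using S.refl a) (by simp) G hG hGb (by omega)
      obtain ⟨z, hz, rfl⟩ := hcov u huG
      refine ⟨z, hedge z hz ?_ a (by simp) hlt, hlZ.lab z hz⟩
      intro hza
      rw [hag z hza] at hlt
      exact absurd (hl.mono a (S.refl a) z hza) (not_le_of_gt hlt)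
  · intro d
    obtain ⟨G, huG, hGb, -, hG⟩ := hb d (hr d)
    obtain ⟨Z, h, hlZ, -, -, -, hcov, -⟩ := extend hrk hr mono S ∅ ∅ (fun _ => d)
      ⟨by simp, by simp, by simp, by simp⟩ (by simp) (by simp) G hG hGb (by simp; omega)
    obtain ⟨z, hz, rfl⟩ := hcov d huG
    exact ⟨z, hlZ.lab z hz⟩

end Combinatorics

section Truth

open Classical

variable {W : Type v} {D : Type v} [PartialOrder D]

/-- Finite samples of the worlds of given position and type. -/
theorem exists_pick (N : ℕ) (A : Set W) : ∃ s : Finset W, (∀ w ∈ s, w ∈ A) ∧ s.card ≤ N ∧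
    (s.card = N ∨ ∀ w ∈ A, w ∈ s) := by
  by_cases h : ∃ s : Finset W, (s : Set W) ⊆ A ∧ s.card = N
  · obtain ⟨s, hs, hc⟩ := h
    exact ⟨s, fun w hw => hs hw, hc.le, Or.inl hc⟩
  · have hf : A.Finite := by
      by_contra hinf
      exact h (Set.Infinite.exists_subset_card_eq hinf N)
    refine ⟨hf.toFinset, by simp, ?_, Or.inr (by simp)⟩
    by_contra hcon
    push Not at hcon
    obtain ⟨t, ht, hc⟩ := Finset.exists_subset_card_eq hcon.le
    exact h ⟨t, fun x hx => by simpa using ht hx, hc⟩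

theorem finite_of_poset (data : W → D) (rk : D → ℕ) (B : ℕ) (hB : ∀ d, rk d ≤ B)
    (hrk : ∀ d d', d < d' → rk d' < rk d) (V : ℕ → Set W) (cl : Finset MF) (hcl : ClosedSet cl)
    (N : ℕ) (hN : ∀ n ψ, MF.dia n ψ ∈ cl → n ≤ N) (hN1 : 1 ≤ N) (φ : MF) (hφ : φ ∈ cl) (w0 : W)
    (hw0 : Sat (fun u v => data u ≤ data v) V φ w0) :
    ∃ (W : Type) (R : W → W → Prop) (V : ℕ → Set W),
      Finite W ∧ (∀ x : W, R x x) ∧ (∀ x y z : W, R x y → R y z → R x z) ∧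
        (∃ w : W, Sat R V φ w) := by
  let M : MF → W → Prop := Sat (fun u v => data u ≤ data v) V
  let Col := ↥(cl.powerset)
  let tp : W → Col := fun w => ⟨cl.filter (fun ψ => M ψ w), by simp⟩
  have htp : ∀ w, ∀ ψ ∈ cl, ψ ∈ (tp w).1 ↔ M ψ w := by
    intro w ψ hψ; simp [tp, hψ]
  have hpick := fun (d : D) (t : Col) => exists_pick N {w | data w = d ∧ tp w = t}
  choose pick hp1 hp2 hp3 using hpick
  let L := (Col → Fin (N + 1)) × Fin (B + 1)
  let lam : D → L := fun d => (fun t => ⟨(pick d t).card, Nat.lt_succ_of_le (hp2 d t)⟩,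
    ⟨rk d, Nat.lt_succ_of_le (hB d)⟩)
  let wt : L → MF → ℕ := fun l ψ => ∑ t ∈ Finset.univ.filter (fun t : Col => ψ ∈ t.1), (l.1 t).1
  let cnt : MF → Finset D → ℕ := fun ψ X => ∑ d ∈ X, wt (lam d) ψ
  let bag : MF → Finset D → Finset W := fun ψ X =>
    X.biUnion fun d => (Finset.univ.filter (fun t : Col => ψ ∈ t.1)).biUnion fun t => pick d t
  have hbag : ∀ ψ X, (bag ψ X).card = cnt ψ X := by
    intro ψ X
    rw [Finset.card_biUnion]
    · refine Finset.sum_congr rfl fun d _ => ?_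
      rw [Finset.card_biUnion]
      intro t _ t' _ hne
      refine Finset.disjoint_left.2 ?_
      intro w h1 h2
      exact hne ((hp1 _ _ w h1).2.symm.trans (hp1 _ _ w h2).2)
    · intro d _ d' _ hne
      refine Finset.disjoint_left.2 ?_
      intro w h1 h2
      obtain ⟨t, -, h1⟩ := Finset.mem_biUnion.1 h1
      obtain ⟨t', -, h2⟩ := Finset.mem_biUnion.1 h2
      exact hne ((hp1 _ _ w h1).1.symm.trans (hp1 _ _ w h2).1)
  let Good : D → Finset D → Prop := fun C X => ∀ ψ ∈ cl, ∀ s : Finset W, s.card ≤ N →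
    (∀ v ∈ s, C ≤ data v ∧ M ψ v) → s.card ≤ cnt ψ X
  have cnt_mono : ∀ ψ X X', X ⊆ X' → cnt ψ X ≤ cnt ψ X' := by
    intro ψ X X' h
    exact Finset.sum_le_sum_of_subset h
  have hmono : ∀ C X X', X ⊆ X' → Good C X → Good C X' := by
    intro C X X' h hg ψ hψ s hs hv
    exact (hg ψ hψ s hs hv).trans (cnt_mono ψ X X' h)
  have hsample : ∀ ψ ∈ cl, ∀ s : Finset W, s.card ≤ N → (∀ v ∈ s, M ψ v) →
      s.card ≤ cnt ψ (s.image data) := by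
    intro ψ hψ s hs hv
    by_cases hfull : ∃ w ∈ s, (pick (data w) (tp w)).card = N
    · obtain ⟨w, hw, hc⟩ := hfull
      rw [← hbag]
      refine hs.trans (hc.ge.trans (Finset.card_le_card ?_))
      intro x hx
      refine Finset.mem_biUnion.2 ⟨data w, Finset.mem_image_of_mem _ hw, ?_⟩
      refine Finset.mem_biUnion.2 ⟨tp w, ?_, hx⟩
      simpa using (htp w ψ hψ).2 (hv w hw)
    · push Not at hfull
      rw [← hbag]
      refine Finset.card_le_card ?_
      intro w hw
      refine Finset.mem_biUnion.2 ⟨data w, Finset.mem_image_of_mem _ hw, ?_⟩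
      refine Finset.mem_biUnion.2 ⟨tp w, ?_, ?_⟩
      · simpa using (htp w ψ hψ).2 (hv w hw)
      · exact (hp3 (data w) (tp w)).resolve_left (hfull w hw) w ⟨rfl, rfl⟩
  have hwit : ∀ C, ∃ X : Finset D, X.card ≤ cl.card * N ∧ (∀ x ∈ X, C ≤ x) ∧ Good C X := by
    intro C
    have : ∀ ψ : MF, ∃ s : Finset W, s.card ≤ N ∧ (∀ v ∈ s, C ≤ data v ∧ M ψ v) ∧
        ∀ s' : Finset W, s'.card ≤ N → (∀ v ∈ s', C ≤ data v ∧ M ψ v) → s'.card ≤ s.card := by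
      intro ψ
      obtain ⟨s, h1, h2, h3⟩ := exists_pick N {v | C ≤ data v ∧ M ψ v}
      refine ⟨s, h2, h1, fun s' hs' hv' => ?_⟩
      rcases h3 with h3 | h3
      · omega
      · exact Finset.card_le_card fun w hw => h3 w (hv' w hw)
    choose s hs1 hs2 hs3 using this
    refine ⟨cl.biUnion fun ψ => (s ψ).image data, ?_, ?_, ?_⟩
    · exact Finset.card_biUnion_le_card_mul _ _ _ fun ψ _ => Finset.card_image_le.trans (hs1 ψ)
    · intro x hx
      obtain ⟨ψ, -, hx⟩ := Finset.mem_biUnion.1 hx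
      obtain ⟨w, hw, rfl⟩ := Finset.mem_image.1 hx
      exact (hs2 ψ w hw).1
    · intro ψ hψ s' hs' hv'
      refine (hs3 ψ s' hs' hv').trans ((hsample ψ hψ (s ψ) (hs1 ψ) fun v hv => (hs2 ψ v hv).2).trans
        (cnt_mono _ _ _ ?_))
      exact Finset.subset_biUnion_of_mem (fun ψ => (s ψ).image data) hψ
  obtain ⟨Ω, hfin, up, lab, hrefl, htrans, hleg, hreal⟩ := finite_poset lam (fun l => l.2.1) B hB
    hrk Good hmono (cl.card * N) hwit
  have := Fintype.ofFinite Ω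
  let U := Σ a : Ω, Σ t : Col, Fin ((lab a).1 t).1
  let R' : U → U → Prop := fun x y => y.1 ∈ up x.1
  let V' : ℕ → Set U := fun p => {x | MF.var p ∈ x.2.1.1}
  have hrep : ∀ (d : D) (t : Col), 0 < ((lam d).1 t).1 → ∃ w, data w = d ∧ tp w = t := by
    intro d t h
    obtain ⟨w, hw⟩ := Finset.card_pos.1 (show 0 < (pick d t).card from h)
    exact ⟨w, hp1 _ _ w hw⟩
  have hpos : ∀ w, 0 < ((lam (data w)).1 (tp w)).1 := by
    intro w
    show 0 < (pick (data w) (tp w)).card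
    rcases hp3 (data w) (tp w) with h | h
    · omega
    · exact Finset.card_pos.2 ⟨w, h w ⟨rfl, rfl⟩⟩
  have hupos : ∀ x : U, 0 < ((lab x.1).1 x.2.1).1 := fun x => Nat.zero_lt_of_lt x.2.2.2
  have hcount : ∀ (a : Ω) (ψ : MF), (Finset.univ.filter
      (fun y : U => y.1 ∈ up a ∧ ψ ∈ y.2.1.1)).card = ∑ b ∈ up a, wt (lab b) ψ := by
    intro a ψ
    have : (Finset.univ.filter (fun y : U => y.1 ∈ up a ∧ ψ ∈ y.2.1.1)) =
        (up a).sigma (fun b => (Finset.univ.filter (fun t : Col => ψ ∈ t.1)).sigma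
          (fun t => (Finset.univ : Finset (Fin ((lab b).1 t).1)))) := by
      ext y
      rw [Finset.mem_filter, Finset.mem_sigma, Finset.mem_sigma, Finset.mem_filter]
      simp
    rw [this, Finset.card_sigma]
    refine Finset.sum_congr rfl fun b _ => ?_
    rw [Finset.card_sigma]
    simp [wt]
  have truth : ∀ χ ∈ cl, ∀ x : U, Sat R' V' χ x ↔ χ ∈ x.2.1.1 := by
    intro χ hχ
    induction χ with
    | var p => intro x; exact Iff.rfl
    | neg ψ ih =>
      intro x
      obtain ⟨g, hl, -⟩ := hleg x.1
      obtain ⟨w, hw, ht⟩ := hrep (g x.1) x.2.1 (by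
        rw [← hl.lab _ (hrefl _)]; exact hupos x)
      have h1 := ih (hcl.neg _ hχ) x
      rw [← ht, htp w _ (hcl.neg _ hχ)] at h1
      rw [← ht, htp w _ hχ]
      exact not_congr h1
    | and ψ θ ih1 ih2 =>
      intro x
      obtain ⟨g, hl, -⟩ := hleg x.1
      obtain ⟨w, hw, ht⟩ := hrep (g x.1) x.2.1 (by
        rw [← hl.lab _ (hrefl _)]; exact hupos x)
      have h1 := ih1 (hcl.and _ _ hχ).1 x
      have h2 := ih2 (hcl.and _ _ hχ).2 x
      rw [← ht, htp w _ (hcl.and _ _ hχ).1] at h1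
      rw [← ht, htp w _ (hcl.and _ _ hχ).2] at h2
      rw [← ht, htp w _ hχ]
      exact and_congr h1 h2
    | dia n ψ ih =>
      intro x
      have hψ := hcl.dia _ _ hχ
      obtain ⟨g, hl, hg, -⟩ := hleg x.1
      obtain ⟨w, hw, ht⟩ := hrep (g x.1) x.2.1 (by
        rw [← hl.lab _ (hrefl _)]; exact hupos x)
      rw [← ht, htp w _ hχ]
      have hc : ∑ b ∈ up x.1, wt (lab b) ψ = cnt ψ ((up x.1).image g) := by
        show _ = ∑ d ∈ _, _
        rw [Finset.sum_image hl.inj]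
        exact Finset.sum_congr rfl fun b hb => by rw [hl.lab b hb]
      have h1 : Sat R' V' (.dia n ψ) x ↔ n ≤ cnt ψ ((up x.1).image g) := by
        rw [← hc, ← hcount]
        constructor
        · rintro ⟨s, hs, hv⟩
          refine hs.trans (Finset.card_le_card fun y hy => ?_)
          rw [Finset.mem_filter]
          exact ⟨Finset.mem_univ _, (hv y hy).1, (ih hψ y).1 (hv y hy).2⟩
        · intro h
          refine ⟨_, h, fun y hy => ?_⟩
          rw [Finset.mem_filter] at hy
          exact ⟨hy.2.1, (ih hψ y).2 hy.2.2⟩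
      rw [h1]
      constructor
      · intro h
        rw [← hbag] at h
        refine ⟨_, h, fun v hv => ?_⟩
        obtain ⟨d, hd, hv⟩ := Finset.mem_biUnion.1 hv
        obtain ⟨t, ht', hv⟩ := Finset.mem_biUnion.1 hv
        obtain ⟨e1, e2⟩ := hp1 _ _ v hv
        obtain ⟨b, hb, rfl⟩ := Finset.mem_image.1 hd
        refine ⟨?_, ?_⟩
        · show data w ≤ data v
          rw [e1, hw]; exact hl.mono _ (hrefl _) b hb
        · rw [Finset.mem_filter] at ht'
          rw [← e2] at ht'
          exact (htp v ψ hψ).1 ht'.2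
      · rintro ⟨s, hs, hv⟩
        obtain ⟨s', hs', hc'⟩ := Finset.exists_subset_card_eq hs
        rw [← hc']
        refine hg ψ hψ s' (by rw [hc']; exact hN n ψ hχ) fun v hv' => ?_
        rw [← hw]
        exact hv v (hs' hv')
    | conv ψ ih =>
      intro x
      have hψ := hcl.conv _ hχ
      constructor
      · rintro ⟨y, hy, hs⟩
        rw [ih hψ] at hs
        obtain ⟨g, hl, -⟩ := hleg y.1
        obtain ⟨w, hw, ht⟩ := hrep (g x.1) x.2.1 (by
          rw [← hl.lab _ hy]; exact hupos x)
        obtain ⟨v, hv, ht'⟩ := hrep (g y.1) y.2.1 (by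
          rw [← hl.lab _ (hrefl _)]; exact hupos y)
        rw [← ht, htp w _ hχ]
        refine ⟨v, ?_, ?_⟩
        · show data v ≤ data w
          rw [hv, hw]; exact hl.mono _ (hrefl _) _ hy
        · rw [← ht'] at hs
          exact (htp v ψ hψ).1 hs
      · intro h
        obtain ⟨g, hl, -, hback⟩ := hleg x.1
        obtain ⟨w, hw, ht⟩ := hrep (g x.1) x.2.1 (by
          rw [← hl.lab _ (hrefl _)]; exact hupos x)
        rw [← ht, htp w _ hχ] at h
        obtain ⟨v, hvw, hv⟩ := h
        obtain ⟨c, hc, hlc⟩ := hback (data v) (by rw [← hw]; exact hvw)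
        have h0 : 0 < ((lab c).1 (tp v)).1 := by rw [hlc]; exact hpos v
        refine ⟨⟨c, tp v, ⟨0, h0⟩⟩, hc, ?_⟩
        rw [ih hψ]
        exact (htp v ψ hψ).2 hv
  refine ⟨U, R', V', inferInstance, fun x => hrefl _, fun x y z h1 h2 => htrans _ _ h1 h2, ?_⟩
  obtain ⟨a, ha⟩ := hreal (data w0)
  have h0 : 0 < ((lab a).1 (tp w0)).1 := by rw [ha]; exact hpos w0
  refine ⟨⟨a, tp w0, ⟨0, h0⟩⟩, ?_⟩
  rw [truth φ hφ]
  exact (htp w0 φ hφ).2 hw0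

end Truth

theorem s4_local_finite_model_property (φ : MF)
    (h : ∃ (W : Type v) (R : W → W → Prop) (V : ℕ → Set W),
      (∀ x : W, R x x) ∧ (∀ x y z : W, R x y → R y z → R x z) ∧
        (∃ w : W, Sat R V φ w)) :
    ∃ (W : Type) (R : W → W → Prop) (V : ℕ → Set W),
      Finite W ∧ (∀ x : W, R x x) ∧ (∀ x y z : W, R x y → R y z → R x z) ∧
        (∃ w : W, Sat R V φ w) := by
  obtain ⟨W, R, V, hrefl, htr, w, hw⟩ := h
  obtain ⟨cl, hφ, hcl⟩ := exists_closure φ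
  obtain ⟨N, hN⟩ := exists_bound cl
  have hN' : ∀ n ψ, MF.dia n ψ ∈ cl → n ≤ N + 1 := fun n ψ h => (hN n ψ h).trans (Nat.le_succ N)
  obtain ⟨D, _, data, rk, B, hB, hrk, hsat⟩ := filtration R V hrefl htr cl hcl (N + 1) hN'
  exact finite_of_poset data rk B hB hrk V cl hcl (N + 1) hN' (Nat.le_add_left 1 N) φ hφ w
    ((hsat φ hφ w).2 hw)
end
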